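/- Let Φ be of type B_n or C_n, let I, J ⊆ Δ, and let λ be an integral Φ_I-regular weight with Φ_{λ̄} = Φ_J. Suppose that for some 1 ≤ i ≤ n the weight s_{e_i}λ is Φ_I-regular and λ ⟷̸ s_{e_i}λ. If (n_m, n̄_{m̄}) ≠ (0, m−1) and (n_m, n̄_{m̄}) ≠ (m̄−1, 0), then (Φ, Φ_I, Φ_J) is strongly separable. -/

import Mathlib

namespace JantzenBlocks

open scoped Classical

/-- The three classical types `B`, `C`, `D`. -/
inductive CType : Type
  | B | C | D
deriving DecidableEq

/-- The weight space `ℝ^n`. -/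
abbrev V (n : ℕ) := Fin n → ℝ

noncomputable section

/-- The standard inner product on `ℝ^n`. -/
def inn {n : ℕ} (x y : V n) : ℝ := ∑ i, x i * y i

/-- The standard basis vector `e i`. -/
def ee {n : ℕ} (i : Fin n) : V n := Pi.single i 1

/-- The reflection `s_v` in the vector `v`. -/
def sRefl {n : ℕ} (v x : V n) : V n := x - (2 * inn x v / inn v v) • v

/-- The roots `±e_i ± e_j` (`i ≠ j`), i.e. the root system of type `D_n`. -/
def DRoots (n : ℕ) : Set (V n) :=
  {v | ∃ i j : Fin n, i ≠ j ∧ (v = ee i + ee j ∨ v = ee i - ee j ∨ v = -ee i - ee j)}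

/-- The ambient root system `Φ` of type `B_n`, `C_n` or `D_n`. -/
def Phi (n : ℕ) : CType → Set (V n)
  | CType.B => DRoots n ∪ {v | ∃ i : Fin n, v = ee i ∨ v = -ee i}
  | CType.C => DRoots n ∪ {v | ∃ i : Fin n, v = (2:ℝ) • ee i ∨ v = -((2:ℝ) • ee i)}
  | CType.D => DRoots n

/-- The standard positive system `Φ⁺`: roots whose first nonzero coordinate is positive. -/
def PhiPos (n : ℕ) (ct : CType) : Set (V n) :=
  {v | v ∈ Phi n ct ∧ ∃ i : Fin n, 0 < v i ∧ ∀ j : Fin n, j < i → v j = 0}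

/-- The simple root `α_{i+1}` (`0`-based index `i`). -/
def alphaR (n : ℕ) (ct : CType) (i : Fin n) : V n :=
  if h : i.1 + 1 < n then ee i - ee ⟨i.1 + 1, h⟩
  else
    match ct with
    | CType.B => ee i
    | CType.C => (2:ℝ) • ee i
    | CType.D => ee ⟨n - 2, Nat.sub_lt i.pos (by norm_num)⟩ + ee i

/-- The subsystem `Φ_I` generated by the simple roots indexed by `I`. -/
def PhiI (n : ℕ) (ct : CType) (I : Finset (Fin n)) : Set (V n) :=
  Phi n ct ∩ (Submodule.span ℝ (alphaR n ct '' (I : Set (Fin n))) : Set (V n))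

/-- `λ` is `Φ_I`-regular. -/
def RegI (n : ℕ) (ct : CType) (I : Finset (Fin n)) (lam : V n) : Prop :=
  ∀ β ∈ PhiI n ct I, inn lam β ≠ 0

/-- `λ` is integral. -/
def IntegralW (n : ℕ) (ct : CType) (lam : V n) : Prop :=
  ∀ β ∈ Phi n ct, ∃ k : ℤ, 2 * inn lam β / inn β β = (k : ℝ)

/-- `λ` is dominant. -/
def DominantW (n : ℕ) (ct : CType) (lam : V n) : Prop :=
  ∀ i : Fin n, 0 ≤ inn lam (alphaR n ct i)

/-- `μ` lies in the `W_I`-orbit of `λ` (`W_I` generated by the reflections `s_α`, `α ∈ I`). -/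
def WIOrb (n : ℕ) (ct : CType) (I : Finset (Fin n)) : V n → V n → Prop :=
  Relation.ReflTransGen (fun x y => ∃ i ∈ I, y = sRefl (alphaR n ct i) x)

/-- `μ` lies in the `W`-orbit of `λ`. -/
def WOrb (n : ℕ) (ct : CType) : V n → V n → Prop := WIOrb n ct Finset.univ

/-- `λ ∈ Λ_I⁺`. -/
def LamIPlus (n : ℕ) (ct : CType) (I : Finset (Fin n)) (lam : V n) : Prop :=
  IntegralW n ct lam ∧ ∀ i ∈ I, 0 < inn lam (alphaR n ct i)

/-- The sorted list `q_1 < q_2 < … < q_{m-1}` (`1`-based values) of indices of `Δ∖I`. -/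
def Qlist (n : ℕ) (I : Finset (Fin n)) : List ℕ :=
  ((Finset.univ \ I).sort (· ≤ ·)).map (fun j => j.1 + 1)

/-- The number `m` of segments determined by `I`. -/
def mval (n : ℕ) (I : Finset (Fin n)) : ℕ := (Qlist n I).length + 1

/-- `q_s`, with the conventions `q_0 = 0` and `q_m = n`. -/
def qval (n : ℕ) (I : Finset (Fin n)) (s : ℕ) : ℕ :=
  if s = 0 then 0 else if s < mval n I then (Qlist n I).getD (s - 1) 0 else n

/-- `I` is standard (automatic in types `B`, `C`). -/
def StandardI (n : ℕ) (ct : CType) (I : Finset (Fin n)) : Prop :=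
  ct = CType.D → ∀ h : 2 ≤ n,
    ((⟨n - 2, by omega⟩ : Fin n) ∈ I ∨ (⟨n - 1, by omega⟩ : Fin n) ∉ I)

/-- `q_s`, corrected for nonstandard `I` (where `q_{m-1}` is replaced by `n`,
so that the `(m-1)`-st segment is `(q_{m-2}, n]` and the `m`-th segment is empty). -/
def qv (n : ℕ) (ct : CType) (I : Finset (Fin n)) (s : ℕ) : ℕ :=
  if ¬ StandardI n ct I ∧ s = mval n I - 1 then n else qval n I s

/-- The segment length `n_s`. -/
def nsval (n : ℕ) (ct : CType) (I : Finset (Fin n)) (s : ℕ) : ℕ :=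
  qv n ct I s - qv n ct I (s - 1)

/-- The (`0`-based) index `i` lies in the `s`-th segment, i.e. `q_{s-1} < i+1 ≤ q_s`. -/
def InSeg (n : ℕ) (ct : CType) (I : Finset (Fin n)) (s : ℕ) (i : Fin n) : Prop :=
  qv n ct I (s - 1) < i.1 + 1 ∧ i.1 + 1 ≤ qv n ct I s

/-- `n_s^λ(a)`: the number of entries of the `s`-th segment of `λ` with absolute value `a`. -/
def nsl (n : ℕ) (ct : CType) (I : Finset (Fin n)) (lam : V n) (s : ℕ) (a : ℝ) : ℕ :=
  (Finset.univ.filter (fun i : Fin n => InSeg n ct I s i ∧ |lam i| = a)).card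

/-- `a_t = λ̄_{q̄_t}` for `1 ≤ t < m̄`, and `a_{m̄} = 0`. -/
def aval (n : ℕ) (ct : CType) (J : Finset (Fin n)) (lbar : V n) (t : ℕ) : ℝ :=
  if t < mval n J then
    (if h : qv n ct J t - 1 < n then lbar ⟨qv n ct J t - 1, h⟩ else 0)
  else 0

/-- `n_s^λ(a)` is maximal among all `Φ_I`-regular weights in the orbit of `λ`. -/
def IsMaxN (n : ℕ) (ct : CType) (I : Finset (Fin n)) (lam : V n) (s : ℕ) (a : ℝ) : Prop :=
  ∀ mu : V n, WOrb n ct lam mu → RegI n ct I mu →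
    nsl n ct I mu s a ≤ nsl n ct I lam s a

/-- The exceptional configurations of Proposition 4.7 (types `B` and `C`, with
`shortR i` the short/long root `e_i` resp. `2e_i`). -/
def ExcBC (n : ℕ) (ct : CType) (I : Finset (Fin n)) (shortR : Fin n → V n)
    (lam β : V n) : Prop :=
  ∃ s : ℕ, 1 ≤ s ∧ s < mval n I ∧ ∃ a : ℝ, 0 < a ∧
    nsl n ct I lam s a = 1 ∧
    nsl n ct I lam s 0 + nsl n ct I lam (mval n I) a = 1 ∧
    ((∃ i j : Fin n, InSeg n ct I s i ∧ InSeg n ct I s j ∧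
        |lam i| = a ∧ lam j = 0 ∧ (β = shortR i ∨ β = ee i + ee j)) ∨
     (∃ i j : Fin n, InSeg n ct I s i ∧ InSeg n ct I (mval n I) j ∧
        ((lam i = a ∧ lam j = a) ∨ (lam i = -a ∧ lam j = -a)) ∧
        (β = shortR i ∨ β = ee i + ee j)) ∨
     (∃ i j : Fin n, InSeg n ct I s i ∧ InSeg n ct I (mval n I) j ∧
        ((lam i = a ∧ lam j = -a) ∨ (lam i = -a ∧ lam j = a)) ∧
        (β = shortR i ∨ β = ee i - ee j)))

/-- The exceptional configurations of Proposition 4.7 (type `D`). -/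
def ExcD (n : ℕ) (I : Finset (Fin n)) (lam β : V n) : Prop :=
  ∃ s : ℕ, 1 ≤ s ∧ s < mval n I ∧ ∃ a : ℝ, 0 < a ∧
    nsl n CType.D I lam s a = 1 ∧ nsl n CType.D I lam (mval n I) a = 1 ∧
    nsl n CType.D I lam s 0 = 1 ∧ nsl n CType.D I lam (mval n I) 0 = 1 ∧
    ∃ i j k l : Fin n, InSeg n CType.D I s i ∧ InSeg n CType.D I s j ∧
      InSeg n CType.D I (mval n I) k ∧ InSeg n CType.D I (mval n I) l ∧
      lam j = 0 ∧ lam l = 0 ∧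
      ((((lam i = a ∧ lam k = a) ∨ (lam i = -a ∧ lam k = -a)) ∧
          (β = ee i + ee j ∨ β = ee i + ee k)) ∨
       (((lam i = a ∧ lam k = -a) ∨ (lam i = -a ∧ lam k = a)) ∧
          (β = ee i + ee j ∨ β = ee i - ee k)))

/-- The exceptional configurations in which `β` fails to be a linked root. -/
def Exc (n : ℕ) (ct : CType) (I : Finset (Fin n)) (lam β : V n) : Prop :=
  match ct with
  | CType.B => ExcBC n CType.B I (fun i => ee i) lam β
  | CType.C => ExcBC n CType.C I (fun i => (2:ℝ) • ee i) lam β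
  | CType.D => ExcD n I lam β

/-- `β` is a linked root of the `Φ_I`-regular weight `λ` (for standard `I`). -/
def PlainLinked (n : ℕ) (ct : CType) (I : Finset (Fin n)) (lam β : V n) : Prop :=
  RegI n ct I lam ∧ β ∈ PhiPos n ct ∧ β ∉ PhiI n ct I ∧
  RegI n ct I (sRefl β lam) ∧ sRefl β lam ≠ lam ∧ ¬ Exc n ct I lam β

/-- The transposition of the last two indices. -/
def swapLast (n : ℕ) (j : Fin n) : Fin n :=
  if j.1 = n - 1 then ⟨n - 2, Nat.sub_lt j.pos (by norm_num)⟩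
  else if j.1 = n - 2 then ⟨n - 1, Nat.sub_lt j.pos (by norm_num)⟩
  else j

/-- The isomorphism `φ = s_{e_n}` (negating the last coordinate). -/
def phiW {n : ℕ} (x : V n) : V n := fun j => if j.1 = n - 1 then -x j else x j

/-- The image `φ(I)` of an index set under `φ` (interchanging `α_{n-1}` and `α_n`). -/
def phiIdx (n : ℕ) (I : Finset (Fin n)) : Finset (Fin n) := I.image (swapLast n)

/-- `β` is a linked root of `λ`; for nonstandard `I` the notion is transported along `φ`. -/
def LinkedRoot (n : ℕ) (ct : CType) (I : Finset (Fin n)) (lam β : V n) : Prop :=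
  if StandardI n ct I then PlainLinked n ct I lam β
  else PlainLinked n ct (phiIdx n I) (phiW lam) (phiW β)

/-- One step in a connecting chain: `y ∈ W_I x`, or `y = w s_β x` for a linked root `β` of `x`. -/
def ConnStep (n : ℕ) (ct : CType) (I : Finset (Fin n)) (x y : V n) : Prop :=
  RegI n ct I x ∧ RegI n ct I y ∧
  (WIOrb n ct I x y ∨ ∃ β : V n, LinkedRoot n ct I x β ∧ WIOrb n ct I (sRefl β x) y)

/-- `λ ⟷ μ`: `λ` and `μ` are connected by a chain of linked roots. -/
def Conn (n : ℕ) (ct : CType) (I : Finset (Fin n)) (lam mu : V n) : Prop :=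
  RegI n ct I lam ∧ RegI n ct I mu ∧
  Relation.ReflTransGen (ConnStep n ct I) lam mu

/-- The set `^IW^Jλ̄ = Wλ̄ ∩ Λ_I⁺` of weights parametrizing the simple modules. -/
def IWJset (n : ℕ) (ct : CType) (I : Finset (Fin n)) (lbar : V n) : Set (V n) :=
  {mu | WOrb n ct lbar mu ∧ LamIPlus n ct I mu}

/-- `(S, S̄)` is a separable pair for the weight `λ`. -/
def IsSepPair (n : ℕ) (ct : CType) (I J : Finset (Fin n)) (lbar lam : V n)
    (S Sb : Finset ℕ) : Prop :=
  S.Nonempty ∧ Sb.Nonempty ∧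
  S ⊆ Finset.Icc 1 (mval n I) ∧ Sb ⊆ Finset.Icc 1 (mval n J) ∧
  1 < mval n I ∧ 1 < mval n J ∧
  (∀ s ∈ S, ∀ t ∈ Sb, IsMaxN n ct I lam s (aval n ct J lbar t)) ∧
  (∀ s ∈ Finset.Icc 1 (mval n I), s ∉ S →
     ∀ t ∈ Finset.Icc 1 (mval n J), t ∉ Sb →
       nsl n ct I lam s (aval n ct J lbar t) = 0) ∧
  (match ct with
   | CType.B => (mval n I ∈ S ↔ mval n J ∉ Sb)
   | CType.C => (mval n I ∈ S ↔ mval n J ∉ Sb)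
   | CType.D => (mval n I ∈ S ↔ mval n J ∈ Sb))

/-- `𝒟`: the set of separable pairs of the system `(Φ, Φ_I, Φ_J)`. -/
def DSet (n : ℕ) (ct : CType) (I J : Finset (Fin n)) (lbar : V n) :
    Set (Finset ℕ × Finset ℕ) :=
  {p | ∀ lam ∈ IWJset n ct I lbar, IsSepPair n ct I J lbar lam p.1 p.2}

/-- The four weakly separable pairs. -/
def IsWeakPair (n : ℕ) (I J : Finset (Fin n)) (p : Finset ℕ × Finset ℕ) : Prop :=
  p = (Finset.Icc 1 (mval n I - 1), {mval n J}) ∨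
  p = (Finset.Icc 1 (mval n I), {mval n J}) ∨
  p = ({mval n I}, Finset.Icc 1 (mval n J - 1)) ∨
  p = ({mval n I}, Finset.Icc 1 (mval n J))

/-- The system `(Φ, Φ_I, Φ_J)` is separable. -/
def SepSys (n : ℕ) (ct : CType) (I J : Finset (Fin n)) (lbar : V n) : Prop :=
  (DSet n ct I J lbar).Nonempty

/-- The system `(Φ, Φ_I, Φ_J)` is strongly separable. -/
def StronglySepSys (n : ℕ) (ct : CType) (I J : Finset (Fin n)) (lbar : V n) : Prop :=
  ∃ p ∈ DSet n ct I J lbar, ¬ IsWeakPair n I J p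

/-- The system `(Φ, Φ_I, Φ_J)` is weakly separable. -/
def WeaklySepSys (n : ℕ) (ct : CType) (I J : Finset (Fin n)) (lbar : V n) : Prop :=
  SepSys n ct I J lbar ∧ ∀ p ∈ DSet n ct I J lbar, IsWeakPair n I J p

/-- The partial ordering on separable pairs: `(S₁,S̄₁) ≤ (S₂,S̄₂)` iff `S₁ ⊆ S₂`, `S̄₁ ⊇ S̄₂`. -/
def pairLE (p q : Finset ℕ × Finset ℕ) : Prop := p.1 ⊆ q.1 ∧ q.2 ⊆ p.2

/-- Strict version of `pairLE`. -/
def pairLT (p q : Finset ℕ × Finset ℕ) : Prop := pairLE p q ∧ p ≠ q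

/-- The generating relations of the equivalence `∼` on `𝒟`. -/
def PairRel (D : Set (Finset ℕ × Finset ℕ)) (p q : Finset ℕ × Finset ℕ) : Prop :=
  p ∈ D ∧ q ∈ D ∧ ((p.2 = q.2 ∧ p.1 ⊆ q.1) ∨ (p.1 = q.1 ∧ p.2 ⊆ q.2))

/-- The equivalence relation `∼` on separable pairs. -/
def PairEquiv (D : Set (Finset ℕ × Finset ℕ)) :
    Finset ℕ × Finset ℕ → Finset ℕ × Finset ℕ → Prop :=
  Relation.EqvGen (PairRel D)

/-- A trivial separable pair. -/
def TrivialPair (n : ℕ) (ct : CType) (I J : Finset (Fin n)) (lbar : V n)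
    (p : Finset ℕ × Finset ℕ) : Prop :=
  match ct with
  | CType.B | CType.C =>
    (∃ s0 : ℕ, 1 ≤ s0 ∧ s0 < mval n I ∧
       PairEquiv (DSet n ct I J lbar) p ({s0}, Finset.Icc 1 (mval n J))) ∨
    (∃ t0 : ℕ, 1 ≤ t0 ∧ t0 < mval n J ∧
       PairEquiv (DSet n ct I J lbar) p (Finset.Icc 1 (mval n I), {t0}))
  | CType.D =>
    (∃ s0 : ℕ, 1 ≤ s0 ∧ s0 < mval n I ∧
       PairEquiv (DSet n ct I J lbar) p ({s0}, Finset.Icc 1 (mval n J - 1))) ∨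
    (∃ t0 : ℕ, 1 ≤ t0 ∧ t0 < mval n J ∧
       PairEquiv (DSet n ct I J lbar) p (Finset.Icc 1 (mval n I - 1), {t0}))

/-- The set of blocks: equivalence classes of `^IW^Jλ̄` under `⟷`. -/
def BlockSet (n : ℕ) (ct : CType) (I : Finset (Fin n)) (lbar : V n) : Set (Set (V n)) :=
  {Cl | ∃ lam ∈ IWJset n ct I lbar,
     Cl = {mu | mu ∈ IWJset n ct I lbar ∧ Conn n ct I lam mu}}

/-- The parity `P(λ)` of the number of negative entries of `λ`. -/
def Pfun (n : ℕ) (lam : V n) : ℕ :=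
  (Finset.univ.filter (fun i : Fin n => lam i < 0)).card % 2

/-- A fundamental chain `c 1 ∼ c 2 ∼ … ∼ c k` in `𝒟`. -/
def IsFundChain (D : Set (Finset ℕ × Finset ℕ)) (c : ℕ → Finset ℕ × Finset ℕ)
    (k : ℕ) : Prop :=
  1 ≤ k ∧ (∀ i, 1 ≤ i → i ≤ k → c i ∈ D) ∧
  (∀ i, 1 ≤ i → i < k →
     ((c i).1 = (c (i+1)).1 ∨ (c i).2 = (c (i+1)).2) ∧
     (pairLT (c i) (c (i+1)) ∨ pairLT (c (i+1)) (c i)))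

/-- The list of parts of the partition `π_I`. -/
def piParts (n : ℕ) (ct : CType) (I : Finset (Fin n)) : List ℕ :=
  (List.range (mval n I - 1)).map (fun s => nsval n ct I (s+1)) ++
  (List.range (mval n I - 1)).map (fun s => nsval n ct I (s+1)) ++
  (match ct with
   | CType.B => [2 * nsval n ct I (mval n I) + 1]
   | CType.C => [2 * nsval n ct I (mval n I)]
   | CType.D => if nsval n ct I (mval n I) = 0 then []
                else [2 * nsval n ct I (mval n I) - 1, 1])

/-- The `i`-th part (`1`-based) of the partition with list of parts `L`. -/
def partAt (L : List ℕ) (i : ℕ) : ℕ :=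
  (L.mergeSort (fun a b => decide (b ≤ a))).getD (i - 1) 0

/-- The `i`-th part (`1`-based) of the dual partition `π^t`: the number of parts `≥ i`. -/
def dualAt (L : List ℕ) (i : ℕ) : ℕ :=
  (L.filter (fun x => decide (i ≤ x))).length

/-- `k` is compatible with the system `(Φ, Φ_I, Φ_J)`. -/
def CompatibleK (n : ℕ) (ct : CType) (I J : Finset (Fin n)) (k : ℕ) : Prop :=
  1 ≤ k ∧ k ≤ 2 * mval n I - 1 ∧
  (match ct with
   | CType.B =>
     (Odd k ∧ k ≤ partAt (piParts n CType.B J) 2 ∧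
        2 * nsval n CType.B J (mval n J) + 1 ≤ k ∧
        partAt (piParts n CType.B I) k ≤ 2 * nsval n CType.B I (mval n I) + 1) ∨
     (Even k ∧ k ≤ 2 * nsval n CType.B J (mval n J) ∧
        2 * nsval n CType.B I (mval n I) + 1 ≤ partAt (piParts n CType.B I) k)
   | CType.C =>
     (Odd k ∧ k ≤ partAt (piParts n CType.C J) 2 ∧
        2 * nsval n CType.C J (mval n J) + 1 ≤ k ∧
        partAt (piParts n CType.C I) k ≤ 2 * nsval n CType.C I (mval n I)) ∨
     (Even k ∧ k ≤ 2 * nsval n CType.C J (mval n J) ∧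
        2 * nsval n CType.C I (mval n I) + 1 ≤ partAt (piParts n CType.C I) k)
   | CType.D =>
     (Even k ∧ k ≤ partAt (piParts n CType.D J) 2 ∧
        2 * nsval n CType.D J (mval n J) ≤ k ∧
        2 * nsval n CType.D I (mval n I) ≤ partAt (piParts n CType.D I) k) ∨
     (Odd k ∧ k ≤ 2 * nsval n CType.D J (mval n J) - 1 ∧
        partAt (piParts n CType.D I) k ≤ 2 * nsval n CType.D I (mval n I) - 1))

/-- `s_{e_{k_1}}^{ε_1} ⋯ s_{e_{k_r}}^{ε_r} μ`. -/
def applyFlips (n : ℕ) (ks : ℕ → Fin n) (eps : ℕ → Bool) : ℕ → V n → V n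
  | 0, v => v
  | (r+1), v =>
      if eps (r+1) then sRefl (ee (ks (r+1))) (applyFlips n ks eps r v)
      else applyFlips n ks eps r v

end

/-!
Up to `W_I`, a `Φ_I`-regular weight is determined by which of the values `0` and `±a_t` occur in
which segment; in the last segment only the absolute values matter. This information is a set of
occupied cells in a table with the segments as rows and the levels `a_t` as columns, where the last
segment and the level `0` are both thought of as an extra vertex, the origin. Linked roots act on
tables by flipping entries and exchanging cells.

Consider the graph on rows, columns and the origin in which an occupied cell gives an edge from its
row to its column and an empty cell an edge in the opposite direction. If the row `s` is reached
from the origin by a walk, then induction on the length of the walk shows that an entry of the row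
`s` can be flipped by moves; complementing and transposing tables preserves moves and gives the
same for columns, and for walks ending at the origin. Hence if `s_{e_i} λ` is not connected to `λ`,
then the vertices reached from the origin, or those not leading to it, form a nontrivial closed set
`T`. Every cell in a row outside `T` and a column in `T` is occupied, and every cell in a row in `T`
and a column outside `T` is empty. By counting, this property depends only on the `W`-orbit, so the
segments outside `T` and the levels in `T` form a separable pair for all weights in the orbit. The
pair is weakly separable only if the last segment and the entries `0` have one of the two excluded
sizes.
-/
/-! ### Configurations and moves -/

section Configurations

universe u v

/-- The cells of a configuration with rows `R` and columns `C`: two `entry` cells for every row and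
column, a cell `zero r` for every row and a cell `last c` for every column. For a weight, a row is a
segment before the last one, a column is a positive absolute value, and a cell records whether
the value with the given sign (respectively the value `0`, respectively the absolute value `c`)
occurs in the segment (respectively in the segment `r`, respectively in the last segment). -/
inductive Cell (R : Type u) (C : Type v) : Type (max u v)
  | entry (r : R) (c : C) (e : Bool) : Cell R C
  | zero (r : R) : Cell R C
  | last (c : C) : Cell R C

/-- A configuration, i.e. a set of occupied cells. -/
abbrev Config (R : Type u) (C : Type v) : Type (max u v) := Cell R C → Bool

namespace Config

open Relation Cell

variable {R : Type u} {C : Type v}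

/-- The configuration that differs from `x` exactly in the cell `p`. -/
noncomputable def toggle (p : Cell R C) (x : Config R C) : Config R C :=
  fun q => xor (x q) (decide (q = p))

/-- The configuration obtained by changing both entries in row `s` and column `a`. -/
noncomputable def flip (s : R) (a : C) (x : Config R C) : Config R C :=
  toggle (entry s a true) (toggle (entry s a false) x)

/-- Exactly one of the two entries in row `s` and column `a` is occupied. -/
def Mixed (x : Config R C) (s : R) (a : C) : Prop := x (entry s a true) ≠ x (entry s a false)

/-- The elementary moves. In terms of weights, a move is the effect of a linked root, up to `W_I`
and up to signs in the last segment: `flip` comes from a short or long root, the others from roots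
`e_i ± e_j` with `i` and `j` in two segments (`flipColumn`, `exchange`, `exchangeZero`), in one
segment (`flipRow`) or with `j` in the last segment (`exchangeLast`). -/
inductive Move : Config R C → Config R C → Prop
  | flip {x s a} : Mixed x s a → x (zero s) = x (last a) → Move x (flip s a x)
  | flipColumn {x s s' a} : s ≠ s' → Mixed x s a → Mixed x s' a → Move x (flip s a (flip s' a x))
  | flipRow {x s a b} : a ≠ b → Mixed x s a → Mixed x s b → Move x (flip s a (flip s b x))
  | exchange {x s s' a b e d e' d'} : s ≠ s' → a ≠ b → xor e d = xor e' d' →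
      x (entry s a e) = true → x (entry s b d) = false →
      x (entry s' a e') = false → x (entry s' b d') = true →
      Move x (toggle (entry s a e) (toggle (entry s b d)
        (toggle (entry s' a e') (toggle (entry s' b d') x))))
  | exchangeZero {x s s' a e e'} : s ≠ s' → x (entry s a e) = true → x (zero s) = false →
      x (entry s' a e') = false → x (zero s') = true →
      Move x (toggle (entry s a e) (toggle (zero s) (toggle (entry s' a e') (toggle (zero s') x))))
  | exchangeLast {x s a b e d} : a ≠ b → x (entry s a e) = true → x (entry s b d) = false →
      x (last a) = false → x (last b) = true →
      Move x (toggle (entry s a e) (toggle (entry s b d) (toggle (last a) (toggle (last b) x))))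

theorem toggle_comm (p q : Cell R C) (x : Config R C) :
    toggle p (toggle q x) = toggle q (toggle p x) :=
  funext fun _ => Bool.xor_right_comm _ _ _

theorem toggle_toggle (p : Cell R C) (x : Config R C) : toggle p (toggle p x) = x := by
  funext q; simp [toggle]

theorem flip_eq_toggle (s : R) (a : C) (e : Bool) (x : Config R C) :
    flip s a x = toggle (entry s a e) (toggle (entry s a (!e)) x) := by
  cases e
  · exact toggle_comm _ _ _
  · rfl

theorem Mixed.exists_slot {x : Config R C} {s : R} {a : C} (h : Mixed x s a) :
    ∃ e, x (entry s a e) = true ∧ x (entry s a !e) = false := by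
  unfold Mixed at h
  cases h1 : x (entry s a true)
  · exact ⟨false, by simpa [h1] using h, h1⟩
  · exact ⟨true, h1, by simpa [h1] using h⟩

theorem apply_entry_eq_of_not_mixed {x : Config R C} {s : R} {a : C} (h : ¬ Mixed x s a)
    (d e : Bool) : x (entry s a d) = x (entry s a e) := by
  have h' : x (entry s a true) = x (entry s a false) := not_not.mp h
  cases d <;> cases e <;> simp [h']

/-! ### Complement and transposition -/

/-- The complementary configuration. -/
def compl (x : Config R C) : Config R C := fun p => !x p

/-- Transposition of cells, interchanging rows and columns. -/
def transposeCell : Cell R C → Cell C R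
  | entry r c e => entry c r e
  | zero r => last r
  | last c => zero c

/-- The transposed complement, which preserves the direction of the edges of the graph of a
configuration. -/
def transposeCompl (x : Config R C) : Config C R := fun p => !x (transposeCell p)

theorem transposeCell_transposeCell (p : Cell R C) : transposeCell (transposeCell p) = p := by
  cases p <;> rfl

theorem compl_compl (x : Config R C) : compl (compl x) = x := by
  funext p; simp [compl]

theorem transposeCompl_transposeCompl (x : Config R C) :
    transposeCompl (transposeCompl x) = x := by
  funext p; simp [transposeCompl, transposeCell_transposeCell]

theorem compl_toggle (p : Cell R C) (x : Config R C) :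
    compl (toggle p x) = toggle p (compl x) := by
  funext q; simp [compl, toggle]

theorem transposeCompl_toggle (p : Cell R C) (x : Config R C) :
    transposeCompl (toggle p x) = toggle (transposeCell p) (transposeCompl x) := by
  funext q
  have hq : transposeCell q = p ↔ q = transposeCell p :=
    ⟨fun h => by rw [← h, transposeCell_transposeCell],
      fun h => by rw [h, transposeCell_transposeCell]⟩
  simp [transposeCompl, toggle, hq]

theorem compl_flip (s : R) (a : C) (x : Config R C) :
    compl (flip s a x) = flip s a (compl x) := by
  simp only [flip, compl_toggle]

theorem transposeCompl_flip (s : R) (a : C) (x : Config R C) :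
    transposeCompl (flip s a x) = flip a s (transposeCompl x) := by
  simp only [flip, transposeCompl_toggle, transposeCell]

theorem Mixed.compl {x : Config R C} {s : R} {a : C} (h : Mixed x s a) :
    Mixed (compl x) s a := by
  simpa [Mixed, Config.compl] using h

theorem Mixed.transposeCompl {x : Config R C} {s : R} {a : C} (h : Mixed x s a) :
    Mixed (transposeCompl x) a s := by
  simpa [Mixed, Config.transposeCompl, transposeCell] using h

theorem Move.compl {x y : Config R C} (h : Move x y) : Move (compl x) (compl y) := by
  cases h with
  | flip hx h => rw [compl_flip]; exact .flip hx.compl (by simp [Config.compl, h])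
  | flipColumn hs h h' => simp only [compl_flip]; exact .flipColumn hs h.compl h'.compl
  | flipRow ha h h' => simp only [compl_flip]; exact .flipRow ha h.compl h'.compl
  | exchange hs ha he h₁ h₂ h₃ h₄ =>
    simp only [compl_toggle]
    convert Move.exchange hs.symm ha he.symm (x := Config.compl x) (by simpa [Config.compl])
      (by simpa [Config.compl]) (by simpa [Config.compl]) (by simpa [Config.compl]) using 1
    simp only [toggle_comm]
  | exchangeZero hs h₁ h₂ h₃ h₄ =>
    simp only [compl_toggle]
    convert Move.exchangeZero hs.symm (x := Config.compl x) (by simpa [Config.compl])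
      (by simpa [Config.compl]) (by simpa [Config.compl]) (by simpa [Config.compl]) using 1
    simp only [toggle_comm]
  | exchangeLast ha h₁ h₂ h₃ h₄ =>
    simp only [compl_toggle]
    convert Move.exchangeLast ha.symm (x := Config.compl x) (by simpa [Config.compl])
      (by simpa [Config.compl]) (by simpa [Config.compl]) (by simpa [Config.compl]) using 1
    simp only [toggle_comm]

theorem Move.transposeCompl {x y : Config R C} (h : Move x y) :
    Move (transposeCompl x) (transposeCompl y) := by
  cases h with
  | flip hx h =>
    rw [transposeCompl_flip]
    exact .flip hx.transposeCompl (by simp [Config.transposeCompl, transposeCell, h])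
  | flipColumn hs h h' =>
    simp only [transposeCompl_flip]; exact .flipRow hs h.transposeCompl h'.transposeCompl
  | flipRow ha h h' =>
    simp only [transposeCompl_flip]; exact .flipColumn ha h.transposeCompl h'.transposeCompl
  | exchange hs ha he h₁ h₂ h₃ h₄ =>
    simp only [transposeCompl_toggle, transposeCell]
    convert Move.exchange ha.symm hs (x := Config.transposeCompl x) ?_
      (by simpa [Config.transposeCompl]) (by simpa [Config.transposeCompl])
      (by simpa [Config.transposeCompl]) (by simpa [Config.transposeCompl]) using 1
    · simp only [toggle_comm]
    · have hxor : ∀ e d e' d' : Bool, xor e d = xor e' d' → xor d d' = xor e e' := by decide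
      exact hxor _ _ _ _ he
  | exchangeZero hs h₁ h₂ h₃ h₄ =>
    simp only [transposeCompl_toggle, transposeCell]
    convert Move.exchangeLast hs.symm (x := Config.transposeCompl x)
      (by simpa [Config.transposeCompl]) (by simpa [Config.transposeCompl])
      (by simpa [Config.transposeCompl]) (by simpa [Config.transposeCompl]) using 1
    simp only [toggle_comm]
  | exchangeLast ha h₁ h₂ h₃ h₄ =>
    simp only [transposeCompl_toggle, transposeCell]
    convert Move.exchangeZero ha.symm (x := Config.transposeCompl x)
      (by simpa [Config.transposeCompl]) (by simpa [Config.transposeCompl])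
      (by simpa [Config.transposeCompl]) (by simpa [Config.transposeCompl]) using 1
    simp only [toggle_comm]

theorem reflTransGen_compl {x y : Config R C} (h : ReflTransGen Move x y) :
    ReflTransGen Move (compl x) (compl y) :=
  ReflTransGen.lift compl (fun _ _ => Move.compl) _ _ h

theorem reflTransGen_transposeCompl {x y : Config R C} (h : ReflTransGen Move x y) :
    ReflTransGen Move (transposeCompl x) (transposeCompl y) :=
  ReflTransGen.lift transposeCompl (fun _ _ => Move.transposeCompl) _ _ h

/-! ### The graph of a configuration -/

/-- The vertices of the graph of a configuration: the rows, the columns and an origin. The `zero`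
cells are thought of as lying in an extra column, and the `last` cells in an extra row, that are
both represented by `origin`. -/
inductive Vertex (R : Type u) (C : Type v) : Type (max u v)
  | row (s : R) : Vertex R C
  | col (a : C) : Vertex R C
  | origin : Vertex R C

/-- The edges of the graph of a configuration: an occupied cell gives an edge from its row to its
column, an empty cell an edge in the opposite direction, where `origin` precedes the columns in
`last` cells and succeeds the rows in `zero` cells. -/
def Edge (x : Config R C) : Vertex R C → Vertex R C → Prop
  | .row s, .col a => ∃ e, x (entry s a e) = true
  | .col a, .row s => ∃ e, x (entry s a e) = false
  | .row s, .origin => x (zero s) = true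
  | .origin, .row s => x (zero s) = false
  | .origin, .col a => x (last a) = true
  | .col a, .origin => x (last a) = false
  | _, _ => False

/-- There is a walk of length `k` from the origin to the given vertex. -/
def ReachedIn (x : Config R C) : ℕ → Vertex R C → Prop
  | 0, v => v = .origin
  | k + 1, v => ∃ w, ReachedIn x k w ∧ Edge x w v

/-- Interchange of the row and column vertices. -/
def transposeVertex : Vertex R C → Vertex C R
  | .row s => .col s
  | .col a => .row a
  | .origin => .origin

theorem Edge.compl {x : Config R C} {v w : Vertex R C} (h : Edge x v w) :
    Edge (compl x) w v := by
  cases v <;> cases w <;> simp_all [Edge, Config.compl]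

theorem Edge.transposeCompl {x : Config R C} {v w : Vertex R C} (h : Edge x v w) :
    Edge (transposeCompl x) (transposeVertex v) (transposeVertex w) := by
  cases v <;> cases w <;> simp_all [Edge, transposeVertex, Config.transposeCompl, transposeCell]

theorem ReachedIn.transposeCompl {x : Config R C} {k : ℕ} {v : Vertex R C}
    (h : ReachedIn x k v) : ReachedIn (transposeCompl x) k (transposeVertex v) := by
  induction k generalizing v with
  | zero => cases h; rfl
  | succ k ih =>
    obtain ⟨w, hw, hwv⟩ := h
    exact ⟨_, ih hw, hwv.transposeCompl⟩

theorem reachedIn_transposeCompl_iff {x : Config R C} {k : ℕ} {v : Vertex R C} :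
    ReachedIn (transposeCompl x) k (transposeVertex v) ↔ ReachedIn x k v := by
  refine ⟨fun h => ?_, ReachedIn.transposeCompl⟩
  have hv : transposeVertex (transposeVertex v) = v := by cases v <;> rfl
  simpa [hv, transposeCompl_transposeCompl] using h.transposeCompl

theorem ReachedIn.of_edge {x y : Config R C} {s : R} {k : ℕ}
    (hxy : ∀ v w, v ≠ .row s → Edge x v w → Edge y v w)
    (hs : ∀ j < k, ¬ ReachedIn x j (.row s)) {v : Vertex R C} (h : ReachedIn x k v) :
    ReachedIn y k v := by
  induction k generalizing v with
  | zero => exact h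
  | succ k ih =>
    obtain ⟨w, hw, hwv⟩ := h
    refine ⟨w, ih (fun j hj => hs j (hj.trans k.lt_succ_self)) hw, hxy _ _ ?_ hwv⟩
    rintro rfl
    exact hs k k.lt_succ_self hw

/-! ### Flips of entries reached from the origin -/

theorem flip_of_flip_sameRow {x : Config R C} {s : R} {a b : C} (hab : a ≠ b)
    (ha : Mixed x s a) (hb : Mixed x s b) (h : ReflTransGen Move x (flip s b x)) :
    ReflTransGen Move x (flip s a x) := by
  have hmove : Move (flip s b x) (flip s a (flip s b (flip s b x))) :=
    .flipRow hab (by simpa [Mixed, flip, toggle, hab] using ha)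
      (by simpa [Mixed, flip, toggle] using hb)
  simp only [flip, toggle_comm, toggle_toggle] at hmove h ⊢
  exact h.tail hmove

theorem flip_of_empty_of_last {x : Config R C} {s : R} {a b : C} (hab : a ≠ b)
    (ha : Mixed x s a) (hb : ∀ d, x (entry s b d) = false)
    (hla : x (last a) = false) (hlb : x (last b) = true) :
    ReflTransGen Move x (flip s a x) := by
  obtain ⟨e, he, he'⟩ := ha.exists_slot
  have hmove : Move x _ := .exchangeLast hab he (hb true) hla hlb
  refine .tail (.single hmove) ?_
  convert Move.exchangeLast (s := s) (e := true) (d := !e) hab.symm ?_ ?_ ?_ ?_ using 1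
  · simp only [flip_eq_toggle s a e, toggle_comm, toggle_toggle]
  all_goals simp [toggle, hab.symm, *]

/-- The entry in the auxiliary row `s'` is moved to column `a`, flipped there, and moved back. -/
theorem flip_of_flip_exchange {x : Config R C} {s s' : R} {a b : C} {e : Bool} (hs : s ≠ s')
    (hab : a ≠ b) (he : x (entry s a e) = true) (he' : x (entry s a !e) = false)
    (hb : ∀ d, x (entry s b d) = false) (ha : ∀ d, x (entry s' a d) = false)
    (hb' : ∀ d, x (entry s' b d) = true) {y : Config R C}
    (hy : y = toggle (entry s a e) (toggle (entry s b true)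
      (toggle (entry s' a e) (toggle (entry s' b true) x))))
    (h : ReflTransGen Move y (flip s' a y)) : ReflTransGen Move x (flip s a x) := by
  have hmove : Move x y :=
    hy ▸ .exchange hs hab rfl he (hb true) (ha e) (hb' true)
  refine .tail (.head hmove h) ?_
  convert Move.exchange (s := s) (s' := s') (a := b) (b := a) (e := true) (d := !e) (e' := true)
    (d' := !e) hs hab.symm rfl ?_ ?_ ?_ ?_ using 1
  · simp only [hy, flip_eq_toggle _ a e, toggle_comm, toggle_toggle]
  all_goals cases e <;> simp_all [flip, toggle, hs.symm, hab.symm]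

theorem flip_of_flip_mixed {x : Config R C} {s s' : R} {a b : C} (hs : s ≠ s') (hab : a ≠ b)
    (hsa : Mixed x s a) (hb : ∀ d, x (entry s b d) = false) (ha : ∀ d, x (entry s' a d) = false)
    (hsb : Mixed x s' b) (h : ReflTransGen Move x (flip s' b x)) :
    ReflTransGen Move x (flip s a x) := by
  obtain ⟨e, he, he'⟩ := hsa.exists_slot
  obtain ⟨d, hd, hd'⟩ := hsb.exists_slot
  have hmove : Move (flip s' b x) _ :=
    .exchange (s := s) (s' := s') (a := a) (b := b) (e := e) (d := !d) (e' := e) (d' := !d)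
      hs hab rfl
      (by simpa [flip, toggle, hs, hab]) (by simpa [flip, toggle, hs, hab] using hb _)
      (by simpa [flip, toggle, hs, hab] using ha _)
      (by rw [flip_eq_toggle s' b d]; simp [toggle, hd'])
  refine .tail (.tail h hmove) ?_
  convert Move.exchange (s := s) (s' := s') (a := b) (b := a) (e := !d) (d := !e) (e' := d)
    (d' := e) hs hab.symm (by simp) ?_ ?_ ?_ ?_ using 1
  · simp only [flip_eq_toggle s a e, flip_eq_toggle s' b d, toggle_comm, toggle_toggle]
  all_goals
    rw [flip_eq_toggle s' b d]; simp [toggle, hs.symm, hab.symm, *]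

theorem Edge.exchange {x : Config R C} {s s' : R} {a b : C} {e : Bool} (hs : s ≠ s') (hab : a ≠ b)
    (he' : x (entry s a !e) = false)
    (hb : ∀ d, x (entry s b d) = false) (ha : ∀ d, x (entry s' a d) = false)
    (hb' : ∀ d, x (entry s' b d) = true) {v w : Vertex R C} (hv : v ≠ .row s) (h : Edge x v w) :
    Edge (toggle (entry s a e) (toggle (entry s b true)
      (toggle (entry s' a e) (toggle (entry s' b true) x)))) v w := by
  match v, w with
  | .row r, .col c =>
    obtain ⟨f, hf⟩ := h
    have hr : r ≠ s := fun hr => hv (hr ▸ rfl)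
    by_cases hrc : r = s' ∧ c = b
    · exact ⟨false, by simp [toggle, hrc, hs.symm, hab.symm, hb']⟩
    · exact ⟨f, by grind [toggle]⟩
  | .col c, .row r =>
    obtain ⟨f, hf⟩ := h
    by_cases hc : c = a ∧ (r = s ∨ r = s')
    · exact ⟨!e, by grind [toggle]⟩
    · by_cases hc' : c = b ∧ (r = s ∨ r = s')
      · exact ⟨decide (r = s'), by grind [toggle]⟩
      · exact ⟨f, by grind [toggle]⟩
  | .row r, .origin | .origin, .row r | .col c, .origin | .origin, .col c =>
    simpa [Edge, toggle] using h

/-- Every mixed entry whose row or column is reached from the origin in `k` steps can be flipped. -/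
def FlipsReachedIn (R : Type u) (C : Type v) (k : ℕ) : Prop :=
  ∀ (x : Config R C) s a, Mixed x s a → x (zero s) = true → x (last a) = false →
    ReachedIn x k (.row s) ∨ ReachedIn x k (.col a) → ReflTransGen Move x (flip s a x)

theorem flip_of_reachedIn_auxiliaryRow {k : ℕ} (ih : FlipsReachedIn R C k) {x : Config R C}
    {s s' : R} {a b : C} (hss' : s ≠ s') (hab : a ≠ b) (hsa : Mixed x s a)
    (hla : x (last a) = false) (hlb : x (last b) = false)
    (hsb : ∀ d, x (entry s b d) = false) (hs'a : ∀ d, x (entry s' a d) = false)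
    (hs'b : ∃ d, x (entry s' b d) = true) (hs' : ReachedIn x k (.row s'))
    (hs : ∀ j < k, ¬ ReachedIn x j (.row s)) : ReflTransGen Move x (flip s a x) := by
  by_cases hs'b' : Mixed x s' b
  · refine flip_of_flip_mixed hss' hab hsa hsb hs'a hs'b' ?_
    by_cases hz' : x (zero s') = true
    · exact ih x s' b hs'b' hz' hlb (.inl hs')
    · exact .single (.flip hs'b' (by simpa [hlb] using hz'))
  obtain ⟨d, hd⟩ := hs'b
  obtain ⟨e, he, he'⟩ := hsa.exists_slot
  have hfull : ∀ d, x (entry s' b d) = true := fun d' =>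
    (apply_entry_eq_of_not_mixed hs'b' d' d).trans hd
  refine flip_of_flip_exchange hss' hab he he' hsb hs'a hfull rfl ?_
  set y := toggle (entry s a e) (toggle (entry s b true)
      (toggle (entry s' a e) (toggle (entry s' b true) x))) with hy
  have hys'a : Mixed y s' a := by cases e <;> simp [Mixed, hy, toggle, hss'.symm, hab, hs'a]
  by_cases hz' : x (zero s') = true
  · refine ih y s' a hys'a (by simp [hy, toggle, hz']) (by simp [hy, toggle, hla])
      (.inl (hs'.of_edge (fun v w hv => ?_) hs))
    exact Edge.exchange hss' hab he' hsb hs'a hfull hv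
  · exact .single (.flip hys'a (by simp [hy, toggle, hla, hz']))

/-- The inductive step for rows: the last two edges `row s' → col b → row s` of a walk of minimal
length `k` provide the auxiliary row and column. -/
theorem flip_of_reachedIn_row {k : ℕ} (ih : ∀ k' < k, FlipsReachedIn R C k') {x : Config R C}
    {s : R} {a : C} (hsa : Mixed x s a) (hz : x (zero s) = true) (hla : x (last a) = false)
    (hk : ReachedIn x k (.row s)) (hs : ∀ j < k, ¬ ReachedIn x j (.row s))
    (ha : ∀ j < k, ¬ ReachedIn x j (.col a)) : ReflTransGen Move x (flip s a x) := by
  obtain _ | k := k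
  · cases hk
  obtain ⟨_ | b | _, hb, hbs⟩ := hk
  · exact hbs.elim
  swap
  · simp [Edge, hz] at hbs
  have hab : a ≠ b := by rintro rfl; exact ha k (by omega) hb
  by_cases hsb : Mixed x s b
  · refine flip_of_flip_sameRow hab hsa hsb ?_
    by_cases hlb : x (last b) = true
    · exact .single (.flip hsb (by rw [hz, hlb]))
    · exact ih k (by omega) x s b hsb hz (by simpa using hlb) (.inr hb)
  obtain ⟨d, hd⟩ := hbs
  have hsb' : ∀ d, x (entry s b d) = false := fun d' =>
    (apply_entry_eq_of_not_mixed hsb d' d).trans hd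
  by_cases hlb : x (last b) = true
  · exact flip_of_empty_of_last hab hsa hsb' hla hlb
  replace hlb : x (last b) = false := by simpa using hlb
  obtain _ | k := k
  · cases hb
  obtain ⟨s' | _ | _, hs', hs'b⟩ := hb
  rotate_left
  · exact hs'b.elim
  · simp [Edge, hlb] at hs'b
  have hss' : s ≠ s' := by rintro rfl; exact hs k (by omega) hs'
  have hs'a : ∀ d, x (entry s' a d) = false := fun d => by
    by_contra hd
    exact ha (k + 1) (by omega) ⟨_, hs', d, by simpa using hd⟩
  exact flip_of_reachedIn_auxiliaryRow (ih k (by omega)) hss' hab hsa hla hlb hsb' hs'a hs'b hs'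
    fun j hj => hs j (by omega)

theorem flipsReachedIn (k : ℕ) : ∀ (R C : Type u), FlipsReachedIn R C k := by
  induction k using Nat.strong_induction_on with
  | _ k ih =>
  intro R C x s a hsa hz hla hk
  by_cases hmin : ∃ j < k, ReachedIn x j (.row s) ∨ ReachedIn x j (.col a)
  · obtain ⟨j, hj, hj'⟩ := hmin
    exact ih j hj R C x s a hsa hz hla hj'
  push Not at hmin
  obtain hk | hk := hk
  · exact flip_of_reachedIn_row (fun j hj => ih j hj R C) hsa hz hla hk
      (fun j hj => (hmin j hj).1) (fun j hj => (hmin j hj).2)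
  · have hflip := flip_of_reachedIn_row (fun j hj => ih j hj C R) hsa.transposeCompl
      (by simp [transposeCompl, transposeCell, hla]) (by simp [transposeCompl, transposeCell, hz])
      hk.transposeCompl
      (fun j hj h => (hmin j hj).2 ((reachedIn_transposeCompl_iff (v := .col a)).mp h))
      (fun j hj h => (hmin j hj).1 ((reachedIn_transposeCompl_iff (v := .row s)).mp h))
    simpa only [transposeCompl_flip, transposeCompl_transposeCompl] using
      reflTransGen_transposeCompl hflip

theorem exists_closed_of_not_flip {R C : Type u} {x : Config R C} {s : R} {a : C}
    (hsa : Mixed x s a) (h : ¬ ReflTransGen Move x (flip s a x)) :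
    ∃ T : Set (Vertex R C), (∀ v w, v ∈ T → Edge x v w → w ∈ T) ∧
      ((.origin ∈ T ∧ .row s ∉ T) ∨ (.origin ∉ T ∧ .col a ∈ T)) := by
  have hne : x (zero s) ≠ x (last a) := fun hxa => h (.single (.flip hsa hxa))
  cases hz : x (zero s)
  · refine ⟨{v | ∀ k, ¬ ReachedIn (compl x) k v},
      fun v w hv hvw k hk => hv (k + 1) ⟨w, hk, hvw.compl⟩,
      .inr ⟨fun h => h 0 rfl, fun k hk => h ?_⟩⟩
    have hla : x (last a) = true := by simpa [hz] using hne.symm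
    have hflip := flipsReachedIn k R C _ s a hsa.compl (by simp [compl, hz]) (by simp [compl, hla])
      (.inr hk)
    simpa only [compl_flip, compl_compl] using reflTransGen_compl hflip
  · refine ⟨{v | ∃ k, ReachedIn x k v}, fun v w ⟨k, hk⟩ hvw => ⟨k + 1, v, hk, hvw⟩,
      .inl ⟨⟨0, rfl⟩, fun ⟨k, hk⟩ => h ?_⟩⟩
    have hla : x (last a) = false := by simpa [hz] using hne.symm
    exact flipsReachedIn k R C x s a hsa hz hla (.inl hk)

end Config

end Configurations

/-! ### Segments -/

section Segments

open Finset

variable {n : ℕ} {ct : CType} {I : Finset (Fin n)}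

/-- The `0`-based number of the segment containing the index `i`, i.e. the number of elements of
`Δ ∖ I` preceding `α_i`. -/
def segIdx (I : Finset (Fin n)) (i : Fin n) : ℕ := #{q ∈ Iᶜ | q < i}

/-- The cardinality `m - 1` of `Δ ∖ I`, which is the `0`-based number of the last segment. -/
def numCuts (I : Finset (Fin n)) : ℕ := #Iᶜ

theorem mval_eq_numCuts_add_one (I : Finset (Fin n)) : mval n I = numCuts I + 1 := by
  simp [mval, Qlist, numCuts, compl_eq_univ_sdiff]

theorem segIdx_mono (I : Finset (Fin n)) : Monotone (segIdx I) := fun _ _ hij =>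
  card_le_card (monotone_filter_right _ fun _ _ hq => hq.trans_le hij)

theorem segIdx_lt_segIdx {i k : Fin n} (hk : k ∉ I) (hki : k < i) : segIdx I k < segIdx I i :=
  card_lt_card <| (ssubset_iff_of_subset
    (monotone_filter_right _ fun _ _ hq => hq.trans hki)).mpr ⟨k, by simp [hk, hki]⟩

theorem segIdx_le_segIdx_iff {i k : Fin n} (hk : k ∉ I) : segIdx I i ≤ segIdx I k ↔ i ≤ k :=
  ⟨fun h => not_lt.mp fun hki => (segIdx_lt_segIdx hk hki).not_ge h, fun h => segIdx_mono I h⟩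

theorem segIdx_le_numCuts (I : Finset (Fin n)) (i : Fin n) : segIdx I i ≤ numCuts I :=
  card_le_card (filter_subset _ _)

theorem segIdx_lt_numCuts {k : Fin n} (hk : k ∉ I) : segIdx I k < numCuts I :=
  card_lt_card <| filter_ssubset.mpr ⟨k, by simp [hk]⟩

theorem segIdx_eq_segIdx_iff {i j : Fin n} (hij : i ≤ j) :
    segIdx I i = segIdx I j ↔ ∀ k, i ≤ k → k < j → k ∈ I := by
  refine ⟨fun h k hik hkj => ?_, fun h => congrArg card (filter_congr fun q hq => ?_)⟩
  · by_contra hk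
    exact hkj.not_ge ((segIdx_le_segIdx_iff hk).mp (h ▸ segIdx_mono I hik))
  · refine ⟨fun hqi => hqi.trans_le hij, fun hqj => not_le.mp fun hiq => ?_⟩
    exact (mem_compl.mp hq) (h q hiq hqj)

theorem segIdx_eq_numCuts_iff {i : Fin n} :
    segIdx I i = numCuts I ↔ ∀ k, i ≤ k → k ∈ I := by
  refine ⟨fun h k hik => ?_, fun h => congrArg card (filter_true_of_mem fun q hq => ?_)⟩
  · by_contra hk
    exact (segIdx_lt_numCuts hk).not_ge (h ▸ segIdx_mono I hik)
  · exact not_le.mp fun hiq => (mem_compl.mp hq) (h q hiq)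

theorem exists_cut (I : Finset (Fin n)) {t : ℕ} (ht : t < numCuts I) :
    ∃ k ∉ I, segIdx I k = t ∧ (Qlist n I).getD t 0 = k + 1 := by
  have hcard : #Iᶜ = numCuts I := rfl
  set f := Iᶜ.orderEmbOfFin hcard with hf
  refine ⟨f ⟨t, ht⟩, mem_compl.mp (orderEmbOfFin_mem _ _ _), ?_, ?_⟩
  · calc segIdx I (f ⟨t, ht⟩) = #{q ∈ univ.map f.toEmbedding | q < f ⟨t, ht⟩} := by
          rw [map_orderEmbOfFin_univ]; rfl
      _ = #(Iio (⟨t, ht⟩ : Fin (numCuts I))) := by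
          rw [filter_map, card_map]; congr 1; ext; simp
      _ = t := Fin.card_Iio _
  · simp only [hf, Qlist, orderEmbOfFin_apply, ← compl_eq_univ_sdiff]
    rw [List.getD_eq_getElem _ _ (by simpa [numCuts] using ht)]
    simp

theorem standardI (hct : ct ≠ .D) (I : Finset (Fin n)) : StandardI n ct I :=
  fun h => absurd h hct

theorem qv_eq_qval (hct : ct ≠ .D) (I : Finset (Fin n)) (s : ℕ) : qv n ct I s = qval n I s := by
  simp [qv, standardI hct]

theorem qv_zero (hct : ct ≠ .D) (I : Finset (Fin n)) : qv n ct I 0 = 0 := by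
  simp [qv_eq_qval hct, qval]

theorem qv_numCuts_add_one (hct : ct ≠ .D) (I : Finset (Fin n)) :
    qv n ct I (numCuts I + 1) = n := by
  simp [qv_eq_qval hct, qval, mval_eq_numCuts_add_one]

theorem exists_qv_add_one_eq (hct : ct ≠ .D) (I : Finset (Fin n)) {t : ℕ} (ht : t < numCuts I) :
    ∃ k ∉ I, segIdx I k = t ∧ qv n ct I (t + 1) = k + 1 := by
  obtain ⟨k, hk, hkt, hq⟩ := exists_cut I ht
  exact ⟨k, hk, hkt, by simp [qv_eq_qval hct, qval, mval_eq_numCuts_add_one, ht, ← hq]⟩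

theorem lt_qv_add_one_iff (hct : ct ≠ .D) {t : ℕ} (ht : t ≤ numCuts I) (i : Fin n) :
    i < qv n ct I (t + 1) ↔ segIdx I i ≤ t := by
  obtain ht | rfl := ht.lt_or_eq
  · obtain ⟨k, hk, rfl, hq⟩ := exists_qv_add_one_eq hct I ht
    rw [hq, Nat.lt_succ_iff, segIdx_le_segIdx_iff hk, Fin.le_def]
  · simp [qv_numCuts_add_one hct, segIdx_le_numCuts]

theorem inSeg_add_one_iff (hct : ct ≠ .D) {s : ℕ} (hs : s ≤ numCuts I) (i : Fin n) :
    InSeg n ct I (s + 1) i ↔ segIdx I i = s := by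
  have hlower : qv n ct I s ≤ i ↔ s ≤ segIdx I i := by
    obtain _ | s := s
    · simp [qv_zero hct]
    · rw [← not_lt, lt_qv_add_one_iff hct (by omega), not_le, Nat.succ_le_iff]
  rw [InSeg, Nat.add_sub_cancel, Nat.lt_succ_iff, Nat.succ_le_iff, hlower,
    lt_qv_add_one_iff hct hs, le_antisymm_iff, and_comm]

theorem nsval_mval (hct : ct ≠ .D) (I : Finset (Fin n)) :
    nsval n ct I (mval n I) = #{i | segIdx I i = numCuts I} := by
  have hseg (i : Fin n) : segIdx I i = numCuts I ↔ qv n ct I (numCuts I) ≤ i := by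
    rw [← inSeg_add_one_iff hct le_rfl, InSeg, qv_numCuts_add_one hct]
    have := i.2
    simp only [Nat.add_sub_cancel]
    omega
  simp only [nsval, mval_eq_numCuts_add_one, qv_numCuts_add_one hct, Nat.add_sub_cancel, hseg]
  have hcard := card_filter_add_card_filter_not (s := univ)
    (fun i : Fin n => (i : ℕ) < qv n ct I (numCuts I))
  simp only [Fin.card_filter_val_lt, not_lt, card_univ, Fintype.card_fin] at hcard
  omega

theorem nsl_add_one (hct : ct ≠ .D) {s : ℕ} (hs : s ≤ numCuts I) (lam : V n) (a : ℝ) :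
    nsl n ct I lam (s + 1) a = #{i | segIdx I i = s ∧ |lam i| = a} := by
  simp only [nsl, inSeg_add_one_iff hct hs]

end Segments

/-! ### Roots and regular weights -/

section Roots

open Finset Function

variable {n : ℕ} {ct : CType} {I : Finset (Fin n)}

theorem inn_ee (x : V n) (i : Fin n) : inn x (ee i) = x i := dotProduct_single_one x i

theorem inn_add (x y z : V n) : inn x (y + z) = inn x y + inn x z := dotProduct_add x y z

theorem inn_neg (x y : V n) : inn x (-y) = -inn x y := dotProduct_neg x y

theorem inn_sub (x y z : V n) : inn x (y - z) = inn x y - inn x z := dotProduct_sub x y z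

theorem inn_smul (c : ℝ) (x y : V n) : inn x (c • y) = c * inn x y := dotProduct_smul c x y

theorem inn_sum {ι : Type*} (x : V n) (s : Finset ι) (f : ι → V n) :
    inn x (∑ k ∈ s, f k) = ∑ k ∈ s, inn x (f k) := dotProduct_sum x s f

theorem ee_apply (i j : Fin n) : (ee i : V n) j = if j = i then 1 else 0 := by
  simp [ee, Pi.single_apply]

theorem sRefl_ee_sub_smul_ee {i j : Fin n} (hij : i ≠ j) {σ : ℝ} (hσ : σ * σ = 1) (x : V n) :
    sRefl (ee i - σ • ee j) x = update (update x i (σ * x j)) j (σ * x i) := by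
  have hinn : inn (ee i - σ • ee j : V n) (ee i - σ • ee j) = 2 := by
    simp only [inn_sub, inn_smul, inn_ee, Pi.sub_apply, Pi.smul_apply, smul_eq_mul, ee_apply,
      if_neg hij, if_neg hij.symm, if_true]
    linear_combination hσ
  funext k
  simp only [sRefl, hinn, inn_sub, inn_smul, inn_ee, Pi.sub_apply, Pi.smul_apply, smul_eq_mul,
    ee_apply, update_apply]
  split_ifs with hki hkj <;> subst_vars
  · exact absurd rfl hij
  · ring
  · linear_combination (-x k) * hσ
  · ring

theorem sRefl_ee_sub_ee {i j : Fin n} (hij : i ≠ j) (x : V n) :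
    sRefl (ee i - ee j) x = x ∘ Equiv.swap i j := by
  have h := sRefl_ee_sub_smul_ee hij (mul_one 1) x
  rw [one_smul, one_mul, one_mul] at h
  rw [h, Equiv.comp_swap_eq_update, update_comm hij]

theorem sRefl_smul_ee {c : ℝ} (hc : c ≠ 0) (i : Fin n) (x : V n) :
    sRefl (c • ee i) x = update x i (-x i) := by
  funext k
  simp only [sRefl, inn_smul, inn_ee, Pi.sub_apply, Pi.smul_apply, smul_eq_mul, ee_apply,
    if_true, update_apply]
  split_ifs with hki
  · subst hki
    field_simp
    ring
  · ring

theorem sRefl_ee (i : Fin n) (x : V n) : sRefl (ee i) x = update x i (-x i) := by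
  simpa using sRefl_smul_ee one_ne_zero i x

/-- The coefficient of the short or long simple root `α_n`, a multiple of `e_n`, in types `B` and
`C`. -/
noncomputable def scl : CType → ℝ
  | .C => 2
  | _ => 1

theorem scl_pos (ct : CType) : 0 < scl ct := by cases ct <;> norm_num [scl]

theorem alphaR_of_lt {i j : Fin n} (hij : (j : ℕ) = i + 1) : alphaR n ct i = ee i - ee j := by
  have hlt : i.1 + 1 < n := hij ▸ j.2
  have hj : j = ⟨i + 1, hlt⟩ := Fin.ext hij
  simp only [alphaR, dif_pos hlt, hj]

theorem alphaR_last (hct : ct ≠ .D) {i : Fin n} (hi : i.1 + 1 = n) :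
    alphaR n ct i = scl ct • ee i := by
  cases ct <;> simp_all [alphaR, scl]

theorem mem_Phi (hct : ct ≠ .D) (v : V n) :
    v ∈ Phi n ct ↔ v ∈ DRoots n ∨ ∃ i, v = scl ct • ee i ∨ v = -(scl ct • ee i) := by
  cases ct <;> simp_all [Phi, scl]

theorem exists_ee_eq_sum_alphaR (hct : ct ≠ .D) (n : ℕ) :
    ∃ c : Fin n → ℝ, (∀ k, 0 < c k) ∧ ∀ i : Fin n, ee i = ∑ k ∈ Ici i, c k • alphaR n ct k := by
  let c (k : Fin n) : ℝ := if k.1 + 1 = n then (scl ct)⁻¹ else 1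
  refine ⟨c, fun k => ?_, fun i => ?_⟩
  · unfold c
    split_ifs
    exacts [inv_pos.mpr (scl_pos ct), one_pos]
  induction hd : n - i.1 generalizing i with
  | zero => omega
  | succ d ih =>
    rw [← Ioi_insert, sum_insert (by simp)]
    by_cases hi : i.1 + 1 = n
    · have hempty : Ioi i = ∅ := eq_empty_of_forall_notMem fun k hk => by
        have := Fin.lt_def.mp (mem_Ioi.mp hk)
        omega
      rw [hempty, sum_empty, add_zero, alphaR_last hct hi, smul_smul,
        show c i = (scl ct)⁻¹ from if_pos hi, inv_mul_cancel₀ (scl_pos ct).ne', one_smul]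
    · let j : Fin n := ⟨i + 1, by omega⟩
      have hIoi : Ioi i = Ici j := by
        ext k
        simp only [mem_Ioi, mem_Ici]
        exact Nat.succ_le_iff.symm
      rw [hIoi, ← ih j (by simp only [j]; omega), show c i = 1 from if_neg hi, one_smul,
        alphaR_of_lt (j := j) rfl, sub_add_cancel]

theorem exists_ee_sub_ee_eq_sum_alphaR (hct : ct ≠ .D) (n : ℕ) :
    ∃ c : Fin n → ℝ, (∀ k, 0 < c k) ∧
      ∀ i j : Fin n, i ≤ j → ee i - ee j = ∑ k ∈ Ico i j, c k • alphaR n ct k := by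
  obtain ⟨c, hc, hee⟩ := exists_ee_eq_sum_alphaR hct n
  refine ⟨c, hc, fun i j hij => ?_⟩
  have hunion : Ici i = Ico i j ∪ Ici j :=
    coe_injective (by push_cast; exact (Set.Ico_union_Ici_eq_Ici hij).symm)
  rw [hee i, hee j, hunion, sum_union, add_sub_cancel_right]
  exact disjoint_left.mpr fun k hk hk' => (mem_Ico.mp hk).2.not_ge (mem_Ici.mp hk')

/-- The span of the simple roots indexed by `I`. -/
def rootSpan (n : ℕ) (ct : CType) (I : Finset (Fin n)) : Submodule ℝ (V n) :=
  Submodule.span ℝ (alphaR n ct '' (I : Set (Fin n)))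

theorem alphaR_mem_rootSpan {k : Fin n} (hk : k ∈ I) : alphaR n ct k ∈ rootSpan n ct I :=
  Submodule.subset_span ⟨k, hk, rfl⟩

/-- The functional sending a vector to the sum of its entries up to the index `q`. Up to a scalar it
is the fundamental coweight dual to `α_q`, so it vanishes on the other simple roots. -/
def partialSum (q : Fin n) : V n →ₗ[ℝ] ℝ := ∑ k ∈ Iic q, LinearMap.proj k

theorem partialSum_ee (q i : Fin n) : partialSum q (ee i) = if i ≤ q then 1 else 0 := by
  simp [partialSum, ee_apply]

theorem partialSum_alphaR (hct : ct ≠ .D) {q k : Fin n} (hkq : k ≠ q) :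
    partialSum q (alphaR n ct k) = 0 := by
  have hkq' : k.1 ≠ q.1 := Fin.val_ne_of_ne hkq
  by_cases hk : k.1 + 1 = n
  · have : ¬ k ≤ q := by rw [Fin.le_def]; omega
    rw [alphaR_last hct hk, map_smul, partialSum_ee, if_neg this, smul_zero]
  · let j : Fin n := ⟨k + 1, by omega⟩
    have : k ≤ q ↔ j ≤ q := by simp only [Fin.le_def, j]; omega
    rw [alphaR_of_lt (j := j) rfl, map_sub, partialSum_ee, partialSum_ee]
    simp only [this, sub_self]

theorem partialSum_eq_zero (hct : ct ≠ .D) {q : Fin n} (hq : q ∉ I) {v : V n}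
    (hv : v ∈ rootSpan n ct I) : partialSum q v = 0 := by
  have hle : rootSpan n ct I ≤ LinearMap.ker (partialSum q) := by
    refine Submodule.span_le.mpr ?_
    rintro _ ⟨k, hk, rfl⟩
    exact partialSum_alphaR hct fun hkq => hq (hkq ▸ hk)
  exact hle hv

theorem ee_mem_rootSpan_iff (hct : ct ≠ .D) {i : Fin n} :
    ee i ∈ rootSpan n ct I ↔ segIdx I i = numCuts I := by
  rw [segIdx_eq_numCuts_iff]
  refine ⟨fun h q hiq => ?_, fun h => ?_⟩
  · by_contra hq
    simpa [partialSum_ee, hiq] using partialSum_eq_zero hct hq h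
  · obtain ⟨c, -, hee⟩ := exists_ee_eq_sum_alphaR hct n
    rw [hee]
    exact sum_mem fun k hk => Submodule.smul_mem _ _ (alphaR_mem_rootSpan (h k (mem_Ici.mp hk)))

theorem smul_ee_mem_rootSpan_iff (hct : ct ≠ .D) {i : Fin n} :
    scl ct • ee i ∈ rootSpan n ct I ↔ segIdx I i = numCuts I := by
  rw [Submodule.smul_mem_iff _ (scl_pos ct).ne', ee_mem_rootSpan_iff hct]

theorem ee_add_ee_mem_rootSpan_iff (hct : ct ≠ .D) {i j : Fin n} :
    ee i + ee j ∈ rootSpan n ct I ↔ segIdx I i = numCuts I ∧ segIdx I j = numCuts I := by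
  refine ⟨fun h => ⟨segIdx_eq_numCuts_iff.mpr fun q hiq => ?_,
    segIdx_eq_numCuts_iff.mpr fun q hjq => ?_⟩, fun h => ?_⟩
  · by_contra hq
    have := partialSum_eq_zero hct hq h
    rw [map_add, partialSum_ee, partialSum_ee, if_pos hiq] at this
    split_ifs at this <;> norm_num at this
  · by_contra hq
    have := partialSum_eq_zero hct hq h
    rw [map_add, partialSum_ee, partialSum_ee, if_pos hjq] at this
    split_ifs at this <;> norm_num at this
  · exact add_mem ((ee_mem_rootSpan_iff hct).mpr h.1) ((ee_mem_rootSpan_iff hct).mpr h.2)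

theorem ee_sub_ee_mem_rootSpan_iff (hct : ct ≠ .D) {i j : Fin n} :
    ee i - ee j ∈ rootSpan n ct I ↔ segIdx I i = segIdx I j := by
  wlog hij : i ≤ j generalizing i j
  · rw [← neg_mem_iff, neg_sub, this (le_of_not_ge hij), eq_comm]
  rw [segIdx_eq_segIdx_iff hij]
  refine ⟨fun h q hiq hqj => ?_, fun h => ?_⟩
  · by_contra hq
    simpa [partialSum_ee, hiq, hqj.not_ge] using partialSum_eq_zero hct hq h
  · obtain ⟨c, -, hee⟩ := exists_ee_sub_ee_eq_sum_alphaR hct n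
    rw [hee i j hij]
    exact sum_mem fun k hk => Submodule.smul_mem _ _
      (alphaR_mem_rootSpan (h k (mem_Ico.mp hk).1 (mem_Ico.mp hk).2))

/-- Regularity with respect to `Φ_I` in terms of the segments: entries in one segment are distinct,
entries of the last segment are nonzero and do not add up to zero. -/
structure SegRegular (I : Finset (Fin n)) (lam : V n) : Prop where
  ne : ∀ i j, i ≠ j → segIdx I i = segIdx I j → lam i ≠ lam j
  ne_zero : ∀ i, segIdx I i = numCuts I → lam i ≠ 0
  add_ne_zero : ∀ i j, i ≠ j → segIdx I i = numCuts I → segIdx I j = numCuts I →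
    lam i + lam j ≠ 0

theorem regI_iff (hct : ct ≠ .D) {lam : V n} : RegI n ct I lam ↔ SegRegular I lam := by
  have hscl := (scl_pos ct).ne'
  constructor
  · refine fun h => ⟨fun i j hij hs he => ?_, fun i hs he => ?_, fun i j hij hs hs' he => ?_⟩
    · exact h (ee i - ee j) ⟨(mem_Phi hct _).mpr (.inl ⟨i, j, hij, .inr (.inl rfl)⟩),
        (ee_sub_ee_mem_rootSpan_iff hct).mpr hs⟩ (by rw [inn_sub, inn_ee, inn_ee, he, sub_self])
    · exact h (scl ct • ee i) ⟨(mem_Phi hct _).mpr (.inr ⟨i, .inl rfl⟩),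
        (smul_ee_mem_rootSpan_iff hct).mpr hs⟩ (by rw [inn_smul, inn_ee, he, mul_zero])
    · exact h (ee i + ee j) ⟨(mem_Phi hct _).mpr (.inl ⟨i, j, hij, .inl rfl⟩),
        (ee_add_ee_mem_rootSpan_iff hct).mpr ⟨hs, hs'⟩⟩ (by rw [inn_add, inn_ee, inn_ee, he])
  · rintro h β ⟨hβ, hspan⟩ h0
    have hspan : β ∈ rootSpan n ct I := hspan
    obtain ⟨i, j, hij, rfl | rfl | rfl⟩ | ⟨i, rfl | rfl⟩ := (mem_Phi hct _).mp hβ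
    · rw [inn_add, inn_ee, inn_ee] at h0
      rw [ee_add_ee_mem_rootSpan_iff hct] at hspan
      exact h.add_ne_zero i j hij hspan.1 hspan.2 h0
    · rw [inn_sub, inn_ee, inn_ee] at h0
      exact h.ne i j hij ((ee_sub_ee_mem_rootSpan_iff hct).mp hspan) (sub_eq_zero.mp h0)
    · rw [← neg_add', inn_neg, inn_add, inn_ee, inn_ee, neg_eq_zero] at h0
      rw [← neg_add', neg_mem_iff, ee_add_ee_mem_rootSpan_iff hct] at hspan
      exact h.add_ne_zero i j hij hspan.1 hspan.2 h0
    · rw [inn_smul, inn_ee, mul_eq_zero_iff_left hscl] at h0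
      exact h.ne_zero i ((smul_ee_mem_rootSpan_iff hct).mp hspan) h0
    · rw [inn_neg, inn_smul, inn_ee, neg_eq_zero, mul_eq_zero_iff_left hscl] at h0
      rw [neg_mem_iff, smul_ee_mem_rootSpan_iff hct] at hspan
      exact h.ne_zero i hspan h0

theorem lt_of_lamIPlus (hct : ct ≠ .D) {lam : V n} (h : LamIPlus n ct I lam) {i j : Fin n}
    (hij : i < j) (hs : segIdx I i = segIdx I j) : lam j < lam i := by
  obtain ⟨c, hc, hee⟩ := exists_ee_sub_ee_eq_sum_alphaR hct n
  rw [← sub_pos, ← inn_ee lam i, ← inn_ee lam j, ← inn_sub, hee i j hij.le, inn_sum]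
  refine sum_pos (fun k hk => ?_) ⟨i, mem_Ico.mpr ⟨le_rfl, hij⟩⟩
  rw [inn_smul]
  obtain ⟨hik, hkj⟩ := mem_Ico.mp hk
  exact mul_pos (hc k) (h.2 k ((segIdx_eq_segIdx_iff hij.le).mp hs k hik hkj))

theorem pos_of_lamIPlus (hct : ct ≠ .D) {lam : V n} (h : LamIPlus n ct I lam) {i : Fin n}
    (hs : segIdx I i = numCuts I) : 0 < lam i := by
  obtain ⟨c, hc, hee⟩ := exists_ee_eq_sum_alphaR hct n
  rw [← inn_ee lam i, hee i, inn_sum]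
  refine sum_pos (fun k hk => ?_) ⟨i, mem_Ici.mpr le_rfl⟩
  rw [inn_smul]
  exact mul_pos (hc k) (h.2 k (segIdx_eq_numCuts_iff.mp hs k (mem_Ici.mp hk)))

theorem regI_of_lamIPlus (hct : ct ≠ .D) {lam : V n} (h : LamIPlus n ct I lam) :
    RegI n ct I lam := by
  refine (regI_iff hct).mpr ⟨fun i j hij hs => ?_, fun i hs => (pos_of_lamIPlus hct h hs).ne',
    fun i j _ hs hs' => (add_pos (pos_of_lamIPlus hct h hs) (pos_of_lamIPlus hct h hs')).ne'⟩
  obtain hij | hij := hij.lt_or_gt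
  · exact (lt_of_lamIPlus hct h hij hs).ne'
  · exact (lt_of_lamIPlus hct h hij hs.symm).ne

end Roots

/-! ### Connections between weights -/

section Connections

open Finset Function Relation

variable {n : ℕ} {ct : CType} {I : Finset (Fin n)} {lam mu nu : V n}

theorem Conn.trans (h : Conn n ct I lam mu) (h' : Conn n ct I mu nu) : Conn n ct I lam nu :=
  ⟨h.1, h'.2.1, h.2.2.trans h'.2.2⟩

theorem conn_of_wIOrb (hlam : RegI n ct I lam) (hmu : RegI n ct I mu) (h : WIOrb n ct I lam mu) :
    Conn n ct I lam mu :=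
  ⟨hlam, hmu, .single ⟨hlam, hmu, .inl h⟩⟩

theorem exc_iff_excBC (hct : ct ≠ .D) (β : V n) :
    Exc n ct I lam β ↔ ExcBC n ct I (fun i => scl ct • ee i) lam β := by
  cases ct <;> simp_all [Exc, scl]

theorem conn_sRefl (hct : ct ≠ .D) {β : V n} (hlam : RegI n ct I lam)
    (hrefl : RegI n ct I (sRefl β lam)) (hpos : β ∈ PhiPos n ct) (hspan : β ∉ rootSpan n ct I)
    (hexc : ¬ ExcBC n ct I (fun i => scl ct • ee i) lam β) : Conn n ct I lam (sRefl β lam) := by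
  by_cases hfix : sRefl β lam = lam
  · rw [hfix]
    exact ⟨hlam, hlam, .refl⟩
  · refine ⟨hlam, hrefl, .single ⟨hlam, hrefl, .inr ⟨β, ?_, .refl⟩⟩⟩
    rw [LinkedRoot, if_pos (standardI hct I)]
    exact ⟨hlam, hpos, fun h => hspan h.2, hrefl, hfix, fun h => hexc ((exc_iff_excBC hct β).mp h)⟩

theorem support_smul_ee {c : ℝ} (hc : c ≠ 0) (i : Fin n) : support (c • ee i : V n) = {i} := by
  ext k
  simp [ee_apply, hc]

theorem support_ee_add_smul_ee {i j : Fin n} (hij : i ≠ j) {τ : ℝ} (hτ : τ ≠ 0) :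
    support (ee i + τ • ee j : V n) = {i, j} := by
  ext k
  by_cases hki : k = i
  · simp [ee_apply, hki, hij]
  · simp [ee_apply, hki, hτ]

theorem smul_ee_mem_PhiPos (hct : ct ≠ .D) (i : Fin n) : scl ct • ee i ∈ PhiPos n ct := by
  refine ⟨(mem_Phi hct _).mpr (.inr ⟨i, .inl rfl⟩), i, ?_, fun k hk => ?_⟩
  · simpa [ee_apply] using scl_pos ct
  · simp [ee_apply, hk.ne]

theorem ee_sub_smul_ee_mem_PhiPos (hct : ct ≠ .D) {i j : Fin n} (hij : i < j) {σ : ℝ}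
    (hσ : σ = 1 ∨ σ = -1) : ee i - σ • ee j ∈ PhiPos n ct := by
  refine ⟨(mem_Phi hct _).mpr (.inl ⟨i, j, hij.ne, ?_⟩), i, ?_, fun k hk => ?_⟩
  · obtain rfl | rfl := hσ
    · exact .inr (.inl (by rw [one_smul]))
    · exact .inl (by rw [neg_one_smul, sub_neg_eq_add])
  · simp [ee_apply, hij.ne]
  · simp [ee_apply, hk.ne, (hk.trans hij).ne]

theorem exists_of_excBC (hct : ct ≠ .D) {β : V n}
    (h : ExcBC n ct I (fun i => scl ct • ee i) lam β) :
    ∃ i j, segIdx I i < numCuts I ∧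
      nsl n ct I lam (segIdx I i + 1) 0 + nsl n ct I lam (numCuts I + 1) |lam i| = 1 ∧
      (segIdx I j = segIdx I i ∧ lam i ≠ 0 ∧ lam j = 0 ∨
        segIdx I j = numCuts I ∧ |lam i| = |lam j|) ∧
      (support β = {i} ∨ support β = {i, j}) := by
  obtain ⟨s, hs, hsm, a, ha, -, hcount, h⟩ := h
  obtain ⟨t, rfl⟩ : ∃ t, s = t + 1 := ⟨s - 1, by omega⟩
  rw [mval_eq_numCuts_add_one] at hsm hcount h
  have ht : t < numCuts I := by omega
  simp only [inSeg_add_one_iff hct ht.le, inSeg_add_one_iff hct le_rfl] at h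
  have hshort (i : Fin n) : support (scl ct • ee i : V n) = {i} :=
    support_smul_ee (scl_pos ct).ne' i
  have hadd {i j : Fin n} (hij : i ≠ j) : support (ee i + ee j : V n) = {i, j} := by
    simpa using support_ee_add_smul_ee hij one_ne_zero
  have hsub {i j : Fin n} (hij : i ≠ j) : support (ee i - ee j : V n) = {i, j} := by
    simpa [sub_eq_add_neg] using support_ee_add_smul_ee hij (neg_ne_zero.mpr one_ne_zero)
  obtain ⟨i, j, rfl, hj, rfl, h0, hβ⟩ | ⟨i, j, rfl, hj, hij, hβ⟩ | ⟨i, j, rfl, hj, hij, hβ⟩ := h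
  · have hi0 : lam i ≠ 0 := abs_pos.mp ha
    have hij : i ≠ j := by
      rintro rfl
      exact hi0 h0
    refine ⟨i, j, ht, hcount, .inl ⟨hj, hi0, h0⟩, ?_⟩
    obtain rfl | rfl := hβ
    exacts [.inl (hshort i), .inr (hadd hij)]
  · obtain ⟨hi, hij⟩ : |lam i| = a ∧ |lam i| = |lam j| := by
      obtain ⟨h, h'⟩ | ⟨h, h'⟩ := hij <;> simp [h, h', abs_of_pos ha]
    have hne : i ≠ j := by
      rintro rfl
      omega
    refine ⟨i, j, ht, hi ▸ hcount, .inr ⟨hj, hij⟩, ?_⟩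
    obtain rfl | rfl := hβ
    exacts [.inl (hshort i), .inr (hadd hne)]
  · obtain ⟨hi, hij⟩ : |lam i| = a ∧ |lam i| = |lam j| := by
      obtain ⟨h, h'⟩ | ⟨h, h'⟩ := hij <;> simp [h, h', abs_of_pos ha]
    have hne : i ≠ j := by
      rintro rfl
      omega
    refine ⟨i, j, ht, hi ▸ hcount, .inr ⟨hj, hij⟩, ?_⟩
    obtain rfl | rfl := hβ
    exacts [.inl (hshort i), .inr (hsub hne)]

theorem conn_update_update (hct : ct ≠ .D) {i j : Fin n} (hij : i ≠ j) {σ : ℝ}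
    (hσ : σ = 1 ∨ σ = -1) (hlam : RegI n ct I lam)
    (hmu : RegI n ct I (update (update lam i (σ * lam j)) j (σ * lam i)))
    (hseg : segIdx I i ≠ segIdx I j ∨ σ = -1 ∧ segIdx I i < numCuts I ∧ lam i ≠ 0 ∧ lam j ≠ 0)
    (habs : |lam i| ≠ |lam j| ∨ segIdx I i < numCuts I ∧ segIdx I j < numCuts I) :
    Conn n ct I lam (update (update lam i (σ * lam j)) j (σ * lam i)) := by
  wlog hlt : i < j generalizing i j
  · rw [update_comm hij] at hmu ⊢
    refine this hij.symm hmu ?_ (habs.imp Ne.symm And.symm) (hij.symm.lt_of_le (not_lt.mp hlt))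
    by_cases hs : segIdx I i = segIdx I j
    · exact .inr (by simpa [hs, and_comm] using hseg)
    · exact .inl (Ne.symm hs)
  have hσσ : σ * σ = 1 := mul_self_eq_one_iff.mpr hσ
  have hσ0 : -σ ≠ 0 := by rintro h; simp_all
  have hsupp : support (ee i - σ • ee j : V n) = {i, j} := by
    simpa [sub_eq_add_neg] using support_ee_add_smul_ee hij hσ0
  rw [← sRefl_ee_sub_smul_ee hij hσσ] at hmu ⊢
  refine conn_sRefl hct hlam hmu (ee_sub_smul_ee_mem_PhiPos hct hlt hσ) (fun hspan => ?_)
    (fun hexc => ?_)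
  · obtain rfl | rfl := hσ
    · rw [one_smul, ee_sub_ee_mem_rootSpan_iff hct] at hspan
      norm_num [hspan] at hseg
    · rw [neg_one_smul, sub_neg_eq_add, ee_add_ee_mem_rootSpan_iff hct] at hspan
      simp [hspan] at hseg
  · obtain ⟨i', j', -, -, hcase, hβ⟩ := exists_of_excBC hct hexc
    rw [hsupp, ← Set.pair_eq_singleton i', Set.pair_eq_pair_iff, Set.pair_eq_pair_iff] at hβ
    grind

theorem conn_update_neg (hct : ct ≠ .D) {i : Fin n} (hlam : RegI n ct I lam)
    (hmu : RegI n ct I (update lam i (-lam i))) (hseg : segIdx I i < numCuts I)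
    (hcount : nsl n ct I lam (segIdx I i + 1) 0 + nsl n ct I lam (numCuts I + 1) |lam i| ≠ 1) :
    Conn n ct I lam (update lam i (-lam i)) := by
  have hscl := (scl_pos ct).ne'
  rw [← sRefl_smul_ee hscl] at hmu ⊢
  refine conn_sRefl hct hlam hmu (smul_ee_mem_PhiPos hct i) (fun hspan => ?_) (fun hexc => ?_)
  · exact hseg.ne ((smul_ee_mem_rootSpan_iff hct).mp hspan)
  · obtain ⟨i', j, -, hcount', -, hβ⟩ := exists_of_excBC hct hexc
    have hi : i' = i := by
      have hmem : i' ∈ support (scl ct • ee i : V n) := by obtain h | h := hβ <;> simp [h]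
      simpa [support_smul_ee hscl] using hmem
    exact hcount (hi ▸ hcount')

end Connections

/-! ### Orbits of `W_I` -/

section Orbits

open Finset Function Relation Equiv

variable {n : ℕ} {ct : CType} {I : Finset (Fin n)} {lam mu : V n}

/-- The permutations of the coordinates that move every weight within its `W_I`-orbit. -/
def orbitPerm (n : ℕ) (ct : CType) (I : Finset (Fin n)) : Submonoid (Perm (Fin n)) where
  carrier := {π | ∀ lam : V n, WIOrb n ct I lam (lam ∘ π)}
  one_mem' _ := .refl
  mul_mem' hπ hρ lam := (hπ lam).trans (hρ _)

theorem swap_mem_orbitPerm_of_forall_mem {i j : Fin n} (hij : i ≤ j)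
    (h : ∀ k, i ≤ k → k < j → k ∈ I) : swap i j ∈ orbitPerm n ct I := by
  obtain ⟨d, hd⟩ : ∃ d, (j : ℕ) = i + d := ⟨j - i, by omega⟩
  induction d generalizing j with
  | zero =>
    obtain rfl : i = j := Fin.ext (by omega)
    rw [swap_self]
    exact one_mem _
  | succ d ih =>
    let k : Fin n := ⟨i + d, by omega⟩
    have hik : i ≤ k := Fin.mk_le_mk.mpr (by omega)
    have hkj : k < j := Fin.mk_lt_mk.mpr (by omega)
    have hadj : swap k j ∈ orbitPerm n ct I := fun lam =>
      .single ⟨k, h k hik hkj, by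
        rw [alphaR_of_lt (by simp [k]; omega), sRefl_ee_sub_ee hkj.ne]⟩
    exact SubmonoidClass.swap_mem_trans _ (ih hik (fun l hil hlk => h l hil (hlk.trans hkj)) rfl)
      hadj

theorem swap_mem_orbitPerm {i j : Fin n} (hij : segIdx I i = segIdx I j) :
    swap i j ∈ orbitPerm n ct I := by
  wlog hle : i ≤ j generalizing i j
  · rw [swap_comm]
    exact this hij.symm (le_of_not_ge hle)
  exact swap_mem_orbitPerm_of_forall_mem hle ((segIdx_eq_segIdx_iff hle).mp hij)

theorem mem_orbitPerm {π : Perm (Fin n)} (hπ : ∀ i, segIdx I (π i) = segIdx I i) :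
    π ∈ orbitPerm n ct I := by
  let S : Set (Perm (Fin n)) := {σ | ∃ i j, i ≠ j ∧ segIdx I i = segIdx I j ∧ σ = swap i j}
  have hS : Submonoid.closure S ≤ orbitPerm n ct I := by
    rw [Submonoid.closure_le]
    rintro _ ⟨i, j, -, hij, rfl⟩
    exact swap_mem_orbitPerm hij
  apply hS
  rw [← Subgroup.closure_toSubmonoid_of_finite, Subgroup.mem_toSubmonoid,
    mem_closure_isSwap (by rintro _ ⟨i, j, hij, -, rfl⟩; exact ⟨i, j, hij, rfl⟩)]
  refine ⟨Set.toFinite _, fun i => ?_⟩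
  obtain h | h := eq_or_ne (π i) i
  · rw [h]
    exact MulAction.mem_orbit_self i
  · exact ⟨⟨swap i (π i), Subgroup.subset_closure ⟨i, π i, h.symm, (hπ i).symm, rfl⟩⟩,
      swap_apply_left i (π i)⟩

theorem wIOrb_update_neg (hct : ct ≠ .D) {i : Fin n} (hi : segIdx I i = numCuts I) (lam : V n) :
    WIOrb n ct I lam (update lam i (-lam i)) := by
  let l : Fin n := ⟨n - 1, Nat.sub_one_lt_of_lt i.2⟩
  have hil : i ≤ l := Fin.mk_le_mk.mpr (Nat.le_sub_one_of_lt i.2)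
  have hl : l ∈ I := segIdx_eq_numCuts_iff.mp hi l hil
  have hswap : swap i l ∈ orbitPerm n ct I := swap_mem_orbitPerm
    (hi.trans (le_antisymm (hi ▸ segIdx_mono I hil) (segIdx_le_numCuts I l)))
  have hneg (mu : V n) : WIOrb n ct I mu (update mu l (-mu l)) :=
    .single ⟨l, hl, by
      rw [alphaR_last hct (by simp [l]; omega), sRefl_smul_ee (scl_pos ct).ne']⟩
  have hconj : update lam i (-lam i) =
      update (lam ∘ swap i l) l (-(lam ∘ swap i l) l) ∘ swap i l := by
    ext k
    simp [update_apply, swap_apply_eq_iff]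
  rw [hconj]
  exact ((hswap lam).trans (hneg _)).trans (hswap _)

theorem wIOrb_of_forall_eq_or_neg (hct : ct ≠ .D)
    (h : ∀ i, mu i = lam i ∨ segIdx I i = numCuts I ∧ mu i = -lam i) : WIOrb n ct I lam mu := by
  have hpartial (F : Finset (Fin n)) : WIOrb n ct I lam (F.piecewise mu lam) := by
    induction F using Finset.induction_on with
    | empty =>
      rw [piecewise_empty]
      exact .refl
    | insert i F hi ih =>
      rw [piecewise_insert]
      obtain h | ⟨hseg, h⟩ := h i
      · rwa [h, ← piecewise_eq_of_notMem F mu lam hi, update_eq_self]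
      · rw [h, ← piecewise_eq_of_notMem F mu lam hi]
        exact ih.trans (wIOrb_update_neg hct hseg _)
  simpa using hpartial univ

end Orbits

/-! ### Placements of weights in configurations -/

section Placements

open Finset Function Relation

namespace Config

universe u v w

variable {R : Type u} {C : Type v} {ι : Type w} {f : ι → Cell R C}

open Classical in
/-- The configuration whose occupied cells are the values of `f`. -/
noncomputable def ofCells (f : ι → Cell R C) : Config R C := fun p => decide (p ∈ Set.range f)

theorem ofCells_eq_true {p : Cell R C} : ofCells f p = true ↔ ∃ i, f i = p := by
  simp [ofCells]

theorem ofCells_eq_false {p : Cell R C} : ofCells f p = false ↔ ∀ i, f i ≠ p := by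
  simp [ofCells]

variable [DecidableEq ι]

theorem injective_update (hf : Injective f) (i : ι) {p : Cell R C} (hp : ofCells f p = false) :
    Injective (update f i p) := by
  have hp := ofCells_eq_false.mp hp
  intro j k hjk
  simp only [update_apply] at hjk
  split_ifs at hjk with hj hk hk
  exacts [hj.trans hk.symm, (hp k hjk.symm).elim, (hp j hjk).elim, hf hjk]

theorem ofCells_update (hf : Injective f) (i : ι) {p : Cell R C} (hp : ofCells f p = false) :
    ofCells (update f i p) = toggle p (toggle (f i) (ofCells f)) := by
  have hp' := ofCells_eq_false.mp hp
  funext q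
  rw [Bool.eq_iff_iff, ofCells_eq_true]
  obtain rfl | hqp := eq_or_ne q p
  · simpa [toggle, hp, (hp' i).symm] using ⟨i, update_self i q f⟩
  obtain rfl | hqi := eq_or_ne q (f i)
  · have hne (j : ι) : update f i p j ≠ f i := by
      rw [update_apply]
      split_ifs with hj
      exacts [hqp.symm, hf.ne hj]
    simp [toggle, hqp, ofCells_eq_true.mpr ⟨i, rfl⟩, hne]
  · simp only [toggle, hqp, hqi, decide_false, Bool.xor_false, ofCells_eq_true, update_apply]
    exact ⟨fun ⟨j, hj⟩ => ⟨j, by split_ifs at hj <;> simp_all⟩,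
      fun ⟨j, hj⟩ => ⟨j, by rwa [if_neg (by rintro rfl; exact hqi hj.symm)]⟩⟩

end Config

open Config

/-- The sign recorded in the third component of a cell `entry r c e`. -/
def boolSign (e : Bool) : ℝ := if e then 1 else -1

theorem boolSign_mul_self_mul (e : Bool) (x : ℝ) : boolSign e * (boolSign e * x) = x := by
  cases e <;> simp [boolSign]

theorem boolSign_not (e : Bool) : boolSign (!e) = -boolSign e := by
  cases e <;> simp [boolSign]

theorem boolSign_xor (e d : Bool) : boolSign (xor e d) = -(boolSign e * boolSign d) := by
  cases e <;> cases d <;> simp [boolSign]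

theorem boolSign_mul_eq_one_or (e d : Bool) :
    boolSign e * boolSign d = 1 ∨ boolSign e * boolSign d = -1 := by
  cases e <;> cases d <;> simp [boolSign]

theorem abs_eq_iff_exists_boolSign {a x : ℝ} (ha : 0 < a) : |x| = a ↔ ∃ e, x = boolSign e * a := by
  simp [abs_eq ha.le, boolSign, or_comm]

/-- A family of distinct positive absolute values, indexed by the columns of a configuration. -/
structure IsLevels {C : Type*} (a : C → ℝ) : Prop where
  pos : ∀ c, 0 < a c
  injective : Injective a

variable {n : ℕ} {ct : CType} {I : Finset (Fin n)} {C : Type} {a : C → ℝ} {lam mu : V n}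
  {f g : Fin n → Cell (Fin (numCuts I)) C}

/-- A value `v` in the segment with (`0`-based) index `t` belongs in the given cell. In the last
segment only the absolute value counts, because `W_I` changes signs there. -/
def Occupies (I : Finset (Fin n)) (a : C → ℝ) (t : ℕ) (v : ℝ) : Cell (Fin (numCuts I)) C → Prop
  | .entry r c e => t = r ∧ v = boolSign e * a c
  | .zero r => t = r ∧ v = 0
  | .last c => t = numCuts I ∧ |v| = a c

theorem IsLevels.abs_boolSign_mul (ha : IsLevels a) (e : Bool) (c : C) :
    |boolSign e * a c| = a c :=
  (abs_eq_iff_exists_boolSign (ha.pos c)).mpr ⟨e, rfl⟩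

theorem IsLevels.boolSign_mul_ne_zero (ha : IsLevels a) (e : Bool) (c : C) :
    boolSign e * a c ≠ 0 :=
  abs_pos.mp ((ha.pos c).trans_eq (ha.abs_boolSign_mul e c).symm)

theorem IsLevels.boolSign_mul_inj (ha : IsLevels a) {e e' : Bool} {c c' : C}
    (h : boolSign e * a c = boolSign e' * a c') : c = c' ∧ e = e' := by
  obtain rfl : c = c' := ha.injective <| by
    rw [← ha.abs_boolSign_mul e c, h, ha.abs_boolSign_mul]
  have := ha.pos c
  refine ⟨rfl, ?_⟩
  cases e <;> cases e' <;> simp [boolSign] at h ⊢ <;> linarith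

theorem Occupies.unique (ha : IsLevels a) {t : ℕ} {v : ℝ} {p q : Cell (Fin (numCuts I)) C}
    (hp : Occupies I a t v p) (hq : Occupies I a t v q) : p = q := by
  cases p <;> cases q <;> obtain ⟨hp, hp'⟩ := hp <;> obtain ⟨hq, hq'⟩ := hq
  case entry.entry r c e r' c' e' =>
    obtain ⟨rfl, rfl⟩ := ha.boolSign_mul_inj (hp'.symm.trans hq')
    rw [Fin.ext (hp.symm.trans hq)]
  case entry.zero => exact (ha.boolSign_mul_ne_zero _ _ (hp'.symm.trans hq')).elim
  case zero.entry => exact (ha.boolSign_mul_ne_zero _ _ (hq'.symm.trans hp')).elim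
  case zero.zero => rw [Fin.ext (hp.symm.trans hq)]
  case last.last => rw [ha.injective (hp'.symm.trans hq')]
  all_goals omega

theorem Occupies.eq_and_eq_or_neg {t t' : ℕ} {v v' : ℝ} {p : Cell (Fin (numCuts I)) C}
    (hp : Occupies I a t v p) (hp' : Occupies I a t' v' p) :
    t = t' ∧ (v' = v ∨ t = numCuts I ∧ v' = -v) := by
  cases p with
  | last c => exact ⟨hp.1.trans hp'.1.symm,
      (abs_eq_abs.mp (hp'.2.trans hp.2.symm)).imp_right fun h => ⟨hp.1, h⟩⟩
  | _ => exact ⟨hp.1.trans hp'.1.symm, .inl (hp'.2.trans hp.2.symm)⟩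

/-- The entries of `lam` occupy the distinct cells `f`. -/
structure IsPlacement (I : Finset (Fin n)) (a : C → ℝ) (lam : V n)
    (f : Fin n → Cell (Fin (numCuts I)) C) : Prop where
  injective : Injective f
  occupies : ∀ i, Occupies I a (segIdx I i) (lam i) (f i)

theorem exists_occupies (ha : IsLevels a) {i : Fin n}
    (h0 : segIdx I i = numCuts I → lam i ≠ 0) (hlam : lam i = 0 ∨ ∃ c, |lam i| = a c) :
    ∃ p, Occupies I a (segIdx I i) (lam i) p := by
  by_cases hi : segIdx I i = numCuts I
  · obtain ⟨c, hc⟩ := hlam.resolve_left (h0 hi)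
    exact ⟨.last c, hi, hc⟩
  · have hlt := (segIdx_le_numCuts I i).lt_of_ne hi
    obtain h | ⟨c, hc⟩ := hlam
    · exact ⟨.zero ⟨_, hlt⟩, rfl, h⟩
    · obtain ⟨e, he⟩ := (abs_eq_iff_exists_boolSign (ha.pos c)).mp hc
      exact ⟨.entry ⟨_, hlt⟩ c e, rfl, he⟩

theorem SegRegular.exists_isPlacement (ha : IsLevels a) (h : SegRegular I lam)
    (hlam : ∀ i, lam i = 0 ∨ ∃ c, |lam i| = a c) : ∃ f, IsPlacement I a lam f := by
  choose f hf using fun i => exists_occupies ha (h.ne_zero i) (hlam i)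
  refine ⟨f, fun i j hij => ?_, hf⟩
  by_contra hne
  obtain ⟨hseg, heq | ⟨hi, heq⟩⟩ := (hf i).eq_and_eq_or_neg (hij ▸ hf j)
  · exact h.ne i j hne hseg heq.symm
  · exact h.add_ne_zero i j hne hi (hseg ▸ hi) (by rw [heq, add_neg_cancel])

theorem IsPlacement.segRegular (ha : IsLevels a) (h : IsPlacement I a lam f) :
    SegRegular I lam := by
  have hlast {i} (hi : segIdx I i = numCuts I) : ∃ c, f i = .last c ∧ |lam i| = a c := by
    have hocc := h.occupies i
    cases hfi : f i <;> rw [hfi] at hocc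
    case last c => exact ⟨c, rfl, hocc.2⟩
    all_goals exact absurd (hi.symm.trans hocc.1) (Fin.is_lt _).ne'
  refine ⟨fun i j hij hseg heq => ?_, fun i hi h0 => ?_, fun i j hij hi hj hsum => ?_⟩
  · exact hij (h.injective ((hseg ▸ heq ▸ h.occupies i).unique ha (h.occupies j)))
  · obtain ⟨c, -, hc⟩ := hlast hi
    exact (ha.pos c).ne (by rw [← hc, h0, abs_zero])
  · obtain ⟨c, hfi, hc⟩ := hlast hi
    obtain ⟨d, hfj, hd⟩ := hlast hj
    rw [eq_neg_of_add_eq_zero_left hsum, abs_neg, hd] at hc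
    exact hij (h.injective (by rw [hfi, hfj, ha.injective hc]))

theorem IsPlacement.regI (hct : ct ≠ .D) (ha : IsLevels a) (h : IsPlacement I a lam f) :
    RegI n ct I lam :=
  (regI_iff hct).mpr (h.segRegular ha)

theorem IsPlacement.update_update (h : IsPlacement I a lam f) {i : Fin n} {v : ℝ}
    {p : Cell (Fin (numCuts I)) C} (hp : Occupies I a (segIdx I i) v p)
    (hpf : ofCells f p = false) : IsPlacement I a (update lam i v) (update f i p) := by
  refine ⟨injective_update h.injective i hpf, fun j => ?_⟩
  obtain rfl | hji := eq_or_ne j i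
  · simpa using hp
  · simpa [hji] using h.occupies j

theorem IsPlacement.wIOrb (hct : ct ≠ .D) (hf : IsPlacement I a lam f)
    (hg : IsPlacement I a mu g) (hfg : ofCells f = ofCells g) : WIOrb n ct I lam mu := by
  have hsub (i : Fin n) : ∃ j, f j = g i := by
    rw [← ofCells_eq_true, hfg, ofCells_eq_true]
    exact ⟨i, rfl⟩
  choose π hπ using hsub
  have hinj : Injective π := fun i j hij => hg.injective (by rw [← hπ, ← hπ, hij])
  have hocc (i : Fin n) := (hf.occupies (π i)).eq_and_eq_or_neg (hπ i ▸ hg.occupies i)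
  have hperm := mem_orbitPerm (ct := ct)
    (π := .ofBijective π (Finite.injective_iff_bijective.mp hinj)) fun i => (hocc i).1
  exact (hperm lam).trans
    (wIOrb_of_forall_eq_or_neg hct fun i =>
      (hocc i).2.imp_right fun ⟨h, h'⟩ => ⟨(hocc i).1 ▸ h, h'⟩)

end Placements

/-! ### Moves are connections -/

section Counting

open Finset Config

variable {n : ℕ} {ct : CType} {I : Finset (Fin n)} {C : Type} {a : C → ℝ} {lam : V n}
  {f : Fin n → Cell (Fin (numCuts I)) C}

theorem IsPlacement.card_eq_toNat (ha : IsLevels a) (h : IsPlacement I a lam f)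
    {p : Cell (Fin (numCuts I)) C} {q : Fin n → Prop} [DecidablePred q]
    (hq : ∀ i, q i ↔ Occupies I a (segIdx I i) (lam i) p) :
    #{i | q i} = (ofCells f p).toNat := by
  have hocc (i : Fin n) : q i ↔ f i = p :=
    (hq i).trans ⟨fun hp => (h.occupies i).unique ha hp, fun hp => hp ▸ h.occupies i⟩
  cases hp : ofCells f p with
  | false => simpa [hocc, filter_eq_empty_iff] using ofCells_eq_false.mp hp
  | true =>
    obtain ⟨i, rfl⟩ := ofCells_eq_true.mp hp
    exact card_eq_one.mpr ⟨i, by ext j; simp [hocc, h.injective.eq_iff]⟩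

theorem IsPlacement.nsl_zero (hct : ct ≠ .D) (ha : IsLevels a) (h : IsPlacement I a lam f)
    (s : Fin (numCuts I)) : nsl n ct I lam (s + 1) 0 = (ofCells f (.zero s)).toNat := by
  rw [nsl_add_one hct s.2.le]
  exact h.card_eq_toNat ha fun i => by rw [abs_eq_zero]; rfl

theorem IsPlacement.nsl_last (hct : ct ≠ .D) (ha : IsLevels a) (h : IsPlacement I a lam f)
    (c : C) : nsl n ct I lam (numCuts I + 1) (a c) = (ofCells f (.last c)).toNat := by
  rw [nsl_add_one hct le_rfl]
  exact h.card_eq_toNat ha fun i => Iff.rfl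

end Counting

section Moves

open Function Relation Cell
open Config hiding flip

variable {n : ℕ} {ct : CType} {I : Finset (Fin n)} {C : Type} {a : C → ℝ} {lam : V n}
  {f : Fin n → Cell (Fin (numCuts I)) C}

theorem IsPlacement.exists_entry (h : IsPlacement I a lam f) {s : Fin (numCuts I)} {c : C}
    {e : Bool} (hx : ofCells f (entry s c e) = true) :
    ∃ i, f i = entry s c e ∧ segIdx I i = s ∧ lam i = boolSign e * a c := by
  obtain ⟨i, hi⟩ := ofCells_eq_true.mp hx
  obtain ⟨hseg, hval⟩ : Occupies I a (segIdx I i) (lam i) (entry s c e) := hi ▸ h.occupies i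
  exact ⟨i, hi, hseg, hval⟩

theorem IsPlacement.exists_zero (h : IsPlacement I a lam f) {s : Fin (numCuts I)}
    (hx : ofCells f (zero s) = true) : ∃ i, f i = zero s ∧ segIdx I i = s ∧ lam i = 0 := by
  obtain ⟨i, hi⟩ := ofCells_eq_true.mp hx
  obtain ⟨hseg, hval⟩ : Occupies I a (segIdx I i) (lam i) (zero s) := hi ▸ h.occupies i
  exact ⟨i, hi, hseg, hval⟩

theorem IsPlacement.exists_last (ha : IsLevels a) (h : IsPlacement I a lam f) {c : C}
    (hx : ofCells f (last c) = true) :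
    ∃ i e, f i = last c ∧ segIdx I i = numCuts I ∧ lam i = boolSign e * a c := by
  obtain ⟨i, hi⟩ := ofCells_eq_true.mp hx
  obtain ⟨hseg, habs⟩ : Occupies I a (segIdx I i) (lam i) (last c) := hi ▸ h.occupies i
  obtain ⟨e, he⟩ := (abs_eq_iff_exists_boolSign (ha.pos c)).mp habs
  exact ⟨i, e, hi, hseg, he⟩

/-- The weight `lam` is connected to a weight whose entries occupy exactly the cells of `y`. -/
def ConnConfig (ct : CType) (I : Finset (Fin n)) (a : C → ℝ) (lam : V n)
    (y : Config (Fin (numCuts I)) C) : Prop :=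
  ∃ mu g, IsPlacement I a mu g ∧ ofCells g = y ∧ Conn n ct I lam mu

theorem IsPlacement.connConfig_exchange (hct : ct ≠ .D) (ha : IsLevels a)
    (h : IsPlacement I a lam f) {i j : Fin n} (hij : i ≠ j) {σ : ℝ} (hσ : σ = 1 ∨ σ = -1)
    {p q : Cell (Fin (numCuts I)) C} (hpq : p ≠ q)
    (hp : Occupies I a (segIdx I i) (σ * lam j) p) (hq : Occupies I a (segIdx I j) (σ * lam i) q)
    (hpf : ofCells f p = false) (hqf : ofCells f q = false)
    (hseg : segIdx I i ≠ segIdx I j ∨ σ = -1 ∧ segIdx I i < numCuts I ∧ lam i ≠ 0 ∧ lam j ≠ 0)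
    (habs : |lam i| ≠ |lam j| ∨ segIdx I i < numCuts I ∧ segIdx I j < numCuts I) :
    ConnConfig ct I a lam (toggle q (toggle (f j) (toggle p (toggle (f i) (ofCells f))))) := by
  have hi := h.update_update hp hpf
  have hqi : ofCells (update f i p) q = false := by
    refine ofCells_eq_false.mpr fun k => ?_
    rw [update_apply]
    split_ifs
    exacts [hpq, ofCells_eq_false.mp hqf k]
  have hj := hi.update_update hq hqi
  refine ⟨_, _, hj, ?_, conn_update_update hct hij hσ (h.regI hct ha) (hj.regI hct ha) hseg habs⟩
  rw [ofCells_update hi.injective j hqi, ofCells_update h.injective i hpf, update_of_ne hij.symm]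

theorem IsPlacement.connConfig_flip (hct : ct ≠ .D) (ha : IsLevels a) (h : IsPlacement I a lam f)
    {s : Fin (numCuts I)} {c : C} (hmixed : Mixed (ofCells f) s c)
    (heq : ofCells f (zero s) = ofCells f (last c)) :
    ConnConfig ct I a lam (Config.flip s c (ofCells f)) := by
  obtain ⟨e, he, hfree⟩ := hmixed.exists_slot
  obtain ⟨i, hfi, hi, hlam⟩ := h.exists_entry he
  have hmu := h.update_update (v := -lam i) (p := entry s c !e) (i := i)
    ⟨hi, by rw [hlam, boolSign_not, neg_mul]⟩ hfree
  refine ⟨_, _, hmu, ?_, conn_update_neg hct (h.regI hct ha) (hmu.regI hct ha) (hi ▸ s.2) ?_⟩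
  · rw [ofCells_update h.injective i hfree, hfi, flip_eq_toggle s c e, toggle_comm]
  · rw [hi, hlam, ha.abs_boolSign_mul, h.nsl_zero hct ha, h.nsl_last hct ha, heq]
    cases ofCells f (last c) <;> simp

theorem IsPlacement.connConfig_flipColumn (hct : ct ≠ .D) (ha : IsLevels a)
    (h : IsPlacement I a lam f) {s s' : Fin (numCuts I)} {c : C} (hs : s ≠ s')
    (hmixed : Mixed (ofCells f) s c) (hmixed' : Mixed (ofCells f) s' c) :
    ConnConfig ct I a lam (Config.flip s c (Config.flip s' c (ofCells f))) := by
  obtain ⟨e, he, hfree⟩ := hmixed.exists_slot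
  obtain ⟨d, hd, hfree'⟩ := hmixed'.exists_slot
  obtain ⟨i, hfi, hi, hlam⟩ := h.exists_entry he
  obtain ⟨j, hfj, hj, hlam'⟩ := h.exists_entry hd
  have hseg : segIdx I i ≠ segIdx I j := by rwa [hi, hj, Ne, Fin.val_inj]
  have hconn := h.connConfig_exchange hct ha (ne_of_apply_ne _ hseg)
    (σ := boolSign (!e) * boolSign d) (p := entry s c !e) (q := entry s' c !d)
    (boolSign_mul_eq_one_or _ _) (by simp [hs])
    ⟨hi, by rw [hlam', mul_assoc, boolSign_mul_self_mul]⟩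
    ⟨hj, by rw [hlam, boolSign_not, boolSign_not, mul_right_comm, neg_mul, neg_mul,
      boolSign_mul_self_mul]; ring⟩
    hfree hfree' (.inl hseg) (.inr ⟨hi ▸ s.2, hj ▸ s'.2⟩)
  rw [hfi, hfj] at hconn
  rw [flip_eq_toggle s c e, flip_eq_toggle s' c d]
  convert hconn using 1
  simp only [toggle_comm]

theorem IsPlacement.connConfig_flipRow (hct : ct ≠ .D) (ha : IsLevels a)
    (h : IsPlacement I a lam f) {s : Fin (numCuts I)} {c c' : C} (hc : c ≠ c')
    (hmixed : Mixed (ofCells f) s c) (hmixed' : Mixed (ofCells f) s c') :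
    ConnConfig ct I a lam (Config.flip s c (Config.flip s c' (ofCells f))) := by
  obtain ⟨e, he, hfree⟩ := hmixed.exists_slot
  obtain ⟨d, hd, hfree'⟩ := hmixed'.exists_slot
  obtain ⟨i, hfi, hi, hlam⟩ := h.exists_entry he
  obtain ⟨j, hfj, hj, hlam'⟩ := h.exists_entry hd
  have hij : i ≠ j := by
    rintro rfl
    simp [hfi, hc] at hfj
  have hconn := h.connConfig_exchange hct ha hij (.inr rfl) (p := entry s c' !d)
    (q := entry s c !e) (by simp [hc.symm])
    ⟨hi, by rw [hlam', boolSign_not, neg_one_mul, neg_mul]⟩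
    ⟨hj, by rw [hlam, boolSign_not, neg_one_mul, neg_mul]⟩ hfree' hfree
    (.inr ⟨rfl, hi ▸ s.2, hlam ▸ ha.boolSign_mul_ne_zero _ _, hlam' ▸ ha.boolSign_mul_ne_zero _ _⟩)
    (.inr ⟨hi ▸ s.2, hj ▸ s.2⟩)
  rw [hfi, hfj] at hconn
  rw [flip_eq_toggle s c e, flip_eq_toggle s c' d]
  convert hconn using 1
  simp only [toggle_comm]

theorem IsPlacement.connConfig_exchangeEntry (hct : ct ≠ .D) (ha : IsLevels a)
    (h : IsPlacement I a lam f) {s s' : Fin (numCuts I)} {c c' : C} {e d e' d' : Bool}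
    (hs : s ≠ s') (hsign : xor e d = xor e' d') (he : ofCells f (entry s c e) = true)
    (hd : ofCells f (entry s c' d) = false) (he' : ofCells f (entry s' c e') = false)
    (hd' : ofCells f (entry s' c' d') = true) :
    ConnConfig ct I a lam (toggle (entry s c e) (toggle (entry s c' d)
      (toggle (entry s' c e') (toggle (entry s' c' d') (ofCells f))))) := by
  obtain ⟨i, hfi, hi, hlam⟩ := h.exists_entry he
  obtain ⟨j, hfj, hj, hlam'⟩ := h.exists_entry hd'
  have hseg : segIdx I i ≠ segIdx I j := by rwa [hi, hj, Ne, Fin.val_inj]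
  have hσ : boolSign d * boolSign d' = boolSign e' * boolSign e := by
    have hsign' : xor d d' = xor e' e := by
      revert hsign
      cases e <;> cases d <;> cases e' <;> cases d' <;> decide
    rw [← neg_inj, ← boolSign_xor, ← boolSign_xor, hsign']
  have hconn := h.connConfig_exchange hct ha (ne_of_apply_ne _ hseg)
    (boolSign_mul_eq_one_or d d') (p := entry s c' d) (q := entry s' c e') (by simp [hs])
    ⟨hi, by rw [hlam', mul_assoc, boolSign_mul_self_mul]⟩
    ⟨hj, by rw [hlam, hσ, mul_assoc, boolSign_mul_self_mul]⟩
    hd he' (.inl hseg) (.inr ⟨hi ▸ s.2, hj ▸ s'.2⟩)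
  rw [hfi, hfj] at hconn
  convert hconn using 1
  simp only [toggle_comm]

theorem IsPlacement.connConfig_exchangeZero (hct : ct ≠ .D) (ha : IsLevels a)
    (h : IsPlacement I a lam f) {s s' : Fin (numCuts I)} {c : C} {e e' : Bool}
    (hs : s ≠ s') (he : ofCells f (entry s c e) = true) (hz : ofCells f (zero s) = false)
    (he' : ofCells f (entry s' c e') = false) (hz' : ofCells f (zero s') = true) :
    ConnConfig ct I a lam (toggle (entry s c e) (toggle (zero s)
      (toggle (entry s' c e') (toggle (zero s') (ofCells f))))) := by
  obtain ⟨i, hfi, hi, hlam⟩ := h.exists_entry he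
  obtain ⟨j, hfj, hj, hlam'⟩ := h.exists_zero hz'
  have hseg : segIdx I i ≠ segIdx I j := by rwa [hi, hj, Ne, Fin.val_inj]
  have hconn := h.connConfig_exchange hct ha (ne_of_apply_ne _ hseg)
    (boolSign_mul_eq_one_or e' e) (p := zero s) (q := entry s' c e') (by simp)
    ⟨hi, by rw [hlam', mul_zero]⟩ ⟨hj, by rw [hlam, mul_assoc, boolSign_mul_self_mul]⟩
    hz he' (.inl hseg) (.inr ⟨hi ▸ s.2, hj ▸ s'.2⟩)
  rw [hfi, hfj] at hconn
  convert hconn using 1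
  simp only [toggle_comm]

theorem IsPlacement.connConfig_exchangeLast (hct : ct ≠ .D) (ha : IsLevels a)
    (h : IsPlacement I a lam f) {s : Fin (numCuts I)} {c c' : C} {e d : Bool}
    (hc : c ≠ c') (he : ofCells f (entry s c e) = true) (hd : ofCells f (entry s c' d) = false)
    (hl : ofCells f (last c) = false) (hl' : ofCells f (last c') = true) :
    ConnConfig ct I a lam (toggle (entry s c e) (toggle (entry s c' d)
      (toggle (last c) (toggle (last c') (ofCells f))))) := by
  obtain ⟨i, hfi, hi, hlam⟩ := h.exists_entry he
  obtain ⟨j, d', hfj, hj, hlam'⟩ := h.exists_last ha hl'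
  have hseg : segIdx I i ≠ segIdx I j := by
    rw [hi, hj]
    exact s.2.ne
  have hσ := boolSign_mul_eq_one_or d d'
  have habs : |boolSign d * boolSign d'| = 1 := by obtain h | h := hσ <;> simp [h]
  have hconn := h.connConfig_exchange hct ha (ne_of_apply_ne _ hseg) hσ
    (p := entry s c' d) (q := last c) (by simp)
    ⟨hi, by rw [hlam', mul_assoc, boolSign_mul_self_mul]⟩
    ⟨hj, by rw [hlam, abs_mul, habs, one_mul, ha.abs_boolSign_mul]⟩ hd hl (.inl hseg)
    (.inl (by rw [hlam, hlam', ha.abs_boolSign_mul, ha.abs_boolSign_mul]; exact ha.injective.ne hc))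
  rw [hfi, hfj] at hconn
  convert hconn using 1
  simp only [toggle_comm]

theorem IsPlacement.connConfig_of_move (hct : ct ≠ .D) (ha : IsLevels a)
    (h : IsPlacement I a lam f) {y : Config (Fin (numCuts I)) C} (hy : Move (ofCells f) y) :
    ConnConfig ct I a lam y := by
  cases hy with
  | flip hmixed heq => exact h.connConfig_flip hct ha hmixed heq
  | flipColumn hs hmixed hmixed' => exact h.connConfig_flipColumn hct ha hs hmixed hmixed'
  | flipRow hc hmixed hmixed' => exact h.connConfig_flipRow hct ha hc hmixed hmixed'
  | exchange hs _ hsign he hd he' hd' =>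
    exact h.connConfig_exchangeEntry hct ha hs hsign he hd he' hd'
  | exchangeZero hs he hz he' hz' => exact h.connConfig_exchangeZero hct ha hs he hz he' hz'
  | exchangeLast hc he hd hl hl' => exact h.connConfig_exchangeLast hct ha hc he hd hl hl'

theorem IsPlacement.connConfig_of_reflTransGen (hct : ct ≠ .D) (ha : IsLevels a)
    (h : IsPlacement I a lam f) {y : Config (Fin (numCuts I)) C}
    (hy : ReflTransGen Move (ofCells f) y) : ConnConfig ct I a lam y := by
  induction hy with
  | refl => exact ⟨lam, f, h, rfl, conn_of_wIOrb (h.regI hct ha) (h.regI hct ha) .refl⟩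
  | tail _ hmove ih =>
    obtain ⟨mu, g, hg, rfl, hconn⟩ := ih
    obtain ⟨nu, k, hk, hky, hconn'⟩ := hg.connConfig_of_move hct ha hmove
    exact ⟨nu, k, hk, hky, hconn.trans hconn'⟩

theorem IsPlacement.conn_of_reflTransGen (hct : ct ≠ .D) (ha : IsLevels a)
    (h : IsPlacement I a lam f) {mu : V n} {g : Fin n → Cell (Fin (numCuts I)) C}
    (hmu : IsPlacement I a mu g) (hfg : ReflTransGen Move (ofCells f) (ofCells g)) :
    Conn n ct I lam mu := by
  obtain ⟨nu, k, hk, hkg, hconn⟩ := h.connConfig_of_reflTransGen hct ha hfg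
  exact hconn.trans (conn_of_wIOrb (hk.regI hct ha) (hmu.regI hct ha) (hk.wIOrb hct hmu hkg))

theorem IsPlacement.exists_closed_of_not_conn (hct : ct ≠ .D) (ha : IsLevels a)
    (h : IsPlacement I a lam f) {i : Fin n} (hreg : RegI n ct I (update lam i (-lam i)))
    (hconn : ¬ Conn n ct I lam (update lam i (-lam i))) :
    ∃ s c, ∃ T : Set (Vertex (Fin (numCuts I)) C),
      (∀ v w, v ∈ T → Edge (ofCells f) v w → w ∈ T) ∧
      ((.origin ∈ T ∧ .row s ∉ T) ∨ (.origin ∉ T ∧ .col c ∈ T)) := by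
  have horb : ¬ WIOrb n ct I lam (update lam i (-lam i)) := fun horb =>
    hconn (conn_of_wIOrb (h.regI hct ha) hreg horb)
  have hocc := h.occupies i
  cases hfi : f i <;> rw [hfi] at hocc
  case zero s =>
    have hzero : lam i = 0 := hocc.2
    refine absurd ?_ horb
    rw [hzero, neg_zero, ← hzero, update_eq_self]
    exact .refl
  case last c => exact absurd (wIOrb_update_neg hct hocc.1 lam) horb
  case entry s c e =>
    obtain ⟨hi, hlam⟩ := hocc
    have hneg : -lam i = boolSign (!e) * a c := by rw [hlam, boolSign_not, neg_mul]
    have hfree : ofCells f (entry s c !e) = false := by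
      refine ofCells_eq_false.mpr fun k hk => ?_
      obtain ⟨hk', hlamk⟩ : Occupies I a (segIdx I k) (lam k) (entry s c !e) := hk ▸ h.occupies k
      have hki : k ≠ i := by
        rintro rfl
        simp [hfi] at hk
      refine ((regI_iff hct).mp hreg).ne k i hki (hk'.trans hi.symm) ?_
      rw [update_of_ne hki, update_self, hlamk, hneg]
    have hmu := h.update_update (p := entry s c !e) ⟨hi, hneg⟩ hfree
    have hflip : ofCells (update f i (entry s c !e)) = Config.flip s c (ofCells f) := by
      rw [ofCells_update h.injective i hfree, hfi, flip_eq_toggle s c e, toggle_comm]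
    have hocc : ofCells f (entry s c e) = true := ofCells_eq_true.mpr ⟨i, hfi⟩
    have hmixed : Mixed (ofCells f) s c := by cases e <;> simp_all [Mixed]
    refine ⟨s, c, exists_closed_of_not_flip hmixed fun hmoves => hconn ?_⟩
    exact h.conn_of_reflTransGen hct ha hmu (hflip ▸ hmoves)

end Moves

/-! ### Dominant weights and their levels -/

section Levels

open Finset Relation Equiv

variable {n : ℕ} {ct : CType} {I J : Finset (Fin n)} {lam mu lbar : V n}

theorem sRefl_sRefl (v x : V n) : sRefl v (sRefl v x) = x := by
  obtain hv | hv := eq_or_ne (inn v v) 0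
  · simp [sRefl, hv]
  · have hinn (y : V n) : inn y v = inn v y := dotProduct_comm y v
    have hneg : inn (sRefl v x) v = -inn x v := by
      rw [sRefl, hinn, inn_sub, inn_smul, ← hinn, div_mul_cancel₀ _ hv]
      ring
    rw [sRefl, hneg, sRefl, mul_neg, neg_div, neg_smul, sub_neg_eq_add, sub_add_cancel]

theorem WOrb.symm (h : WOrb n ct lam mu) : WOrb n ct mu lam := by
  induction h with
  | refl => exact .refl
  | tail _ hstep ih =>
    obtain ⟨k, hk, rfl⟩ := hstep
    exact ReflTransGen.head ⟨k, hk, (sRefl_sRefl _ _).symm⟩ ih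

theorem WOrb.exists_abs_eq (hct : ct ≠ .D) (h : WOrb n ct lam mu) :
    ∃ π : Perm (Fin n), ∀ i, |mu i| = |lam (π i)| := by
  induction h with
  | refl => exact ⟨1, fun _ => rfl⟩
  | @tail mu _ _ hstep ih =>
    obtain ⟨π, hπ⟩ := ih
    obtain ⟨k, -, rfl⟩ := hstep
    by_cases hk : k.1 + 1 = n
    · refine ⟨π, fun i => ?_⟩
      rw [alphaR_last hct hk, sRefl_smul_ee (scl_pos ct).ne', ← hπ, Function.update_apply]
      split_ifs with hi
      · rw [abs_neg, hi]
      · rfl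
    · let j : Fin n := ⟨k + 1, by omega⟩
      refine ⟨π * swap k j, fun i => ?_⟩
      rw [alphaR_of_lt (j := j) rfl, sRefl_ee_sub_ee (by simp [j, Fin.ext_iff])]
      exact hπ _

theorem DominantW.apply_nonneg (hct : ct ≠ .D) (h : DominantW n ct lbar) (i : Fin n) :
    0 ≤ lbar i := by
  obtain ⟨c, hc, hee⟩ := exists_ee_eq_sum_alphaR hct n
  rw [← inn_ee lbar i, hee i, inn_sum]
  exact sum_nonneg fun k _ => by rw [inn_smul]; exact mul_nonneg (hc k).le (h k)

theorem DominantW.apply_eq_zero_iff (hct : ct ≠ .D) (h : DominantW n ct lbar)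
    (hJ : ∀ i, i ∈ J ↔ inn lbar (alphaR n ct i) = 0) {i : Fin n} :
    lbar i = 0 ↔ segIdx J i = numCuts J := by
  obtain ⟨c, hc, hee⟩ := exists_ee_eq_sum_alphaR hct n
  rw [← inn_ee lbar i, hee i, inn_sum, sum_eq_zero_iff_of_nonneg, segIdx_eq_numCuts_iff]
  · simp only [mem_Ici, inn_smul, mul_eq_zero_iff_left (hc _).ne', hJ]
  · exact fun k _ => by rw [inn_smul]; exact mul_nonneg (hc k).le (h k)

theorem DominantW.apply_eq_apply_iff (hct : ct ≠ .D) (h : DominantW n ct lbar)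
    (hJ : ∀ i, i ∈ J ↔ inn lbar (alphaR n ct i) = 0) {i j : Fin n} :
    lbar i = lbar j ↔ segIdx J i = segIdx J j := by
  wlog hij : i ≤ j generalizing i j
  · rw [eq_comm, this (le_of_not_ge hij), eq_comm]
  obtain ⟨c, hc, hee⟩ := exists_ee_sub_ee_eq_sum_alphaR hct n
  rw [← sub_eq_zero, ← inn_ee lbar i, ← inn_ee lbar j, ← inn_sub, hee i j hij, inn_sum,
    sum_eq_zero_iff_of_nonneg, segIdx_eq_segIdx_iff hij]
  · simp only [mem_Ico, inn_smul, mul_eq_zero_iff_left (hc _).ne', hJ, and_imp]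
  · exact fun k _ => by rw [inn_smul]; exact mul_nonneg (hc k).le (h k)

theorem exists_aval_add_one_eq (hct : ct ≠ .D) (J : Finset (Fin n)) (lbar : V n) {t : ℕ}
    (ht : t < numCuts J) : ∃ k, segIdx J k = t ∧ aval n ct J lbar (t + 1) = lbar k := by
  obtain ⟨k, -, hkt, hq⟩ := exists_qv_add_one_eq hct J ht
  exact ⟨k, hkt, by simp [aval, mval_eq_numCuts_add_one, ht, hq]⟩

theorem aval_numCuts_add_one (J : Finset (Fin n)) (lbar : V n) :
    aval n ct J lbar (numCuts J + 1) = 0 := by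
  simp [aval, mval_eq_numCuts_add_one]

/-- The nonzero values `a_1, …, a_{m̄-1}` of the dominant weight `lbar`, indexed from `0`. -/
noncomputable def levels (n : ℕ) (ct : CType) (J : Finset (Fin n)) (lbar : V n)
    (c : Fin (numCuts J)) : ℝ :=
  aval n ct J lbar (c + 1)

theorem DominantW.isLevels (hct : ct ≠ .D) (h : DominantW n ct lbar)
    (hJ : ∀ i, i ∈ J ↔ inn lbar (alphaR n ct i) = 0) : IsLevels (levels n ct J lbar) where
  pos c := by
    obtain ⟨k, hk, hval⟩ := exists_aval_add_one_eq hct J lbar c.2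
    rw [levels, hval]
    refine (h.apply_nonneg hct k).lt_of_ne' fun h0 => c.2.ne ?_
    rw [← hk, (h.apply_eq_zero_iff hct hJ).mp h0]
  injective c d hcd := by
    obtain ⟨k, hk, hval⟩ := exists_aval_add_one_eq hct J lbar c.2
    obtain ⟨l, hl, hval'⟩ := exists_aval_add_one_eq hct J lbar d.2
    rw [levels, levels, hval, hval', h.apply_eq_apply_iff hct hJ] at hcd
    exact Fin.ext (hk.symm.trans (hcd.trans hl))

theorem DominantW.eq_zero_or_exists_levels (hct : ct ≠ .D) (h : DominantW n ct lbar)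
    (hJ : ∀ i, i ∈ J ↔ inn lbar (alphaR n ct i) = 0) (i : Fin n) :
    lbar i = 0 ∨ ∃ c, |lbar i| = levels n ct J lbar c := by
  refine or_iff_not_imp_left.mpr fun h0 => ?_
  rw [h.apply_eq_zero_iff hct hJ] at h0
  have hlt := (segIdx_le_numCuts J i).lt_of_ne h0
  obtain ⟨k, hk, hval⟩ := exists_aval_add_one_eq (ct := ct) hct J lbar hlt
  refine ⟨⟨_, hlt⟩, ?_⟩
  rw [levels, hval, abs_of_nonneg (h.apply_nonneg hct i), h.apply_eq_apply_iff hct hJ, hk]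

theorem DominantW.exists_isPlacement (hct : ct ≠ .D) (h : DominantW n ct lbar)
    (hJ : ∀ i, i ∈ J ↔ inn lbar (alphaR n ct i) = 0) (horb : WOrb n ct lbar mu)
    (hreg : RegI n ct I mu) : ∃ f, IsPlacement I (levels n ct J lbar) mu f := by
  obtain ⟨π, hπ⟩ := horb.exists_abs_eq hct
  refine ((regI_iff hct).mp hreg).exists_isPlacement (h.isLevels hct hJ) fun i => ?_
  rw [hπ, ← abs_eq_zero, hπ, abs_eq_zero]
  exact h.eq_zero_or_exists_levels hct hJ (π i)

theorem DominantW.nsval_mval (hct : ct ≠ .D) (h : DominantW n ct lbar)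
    (hJ : ∀ i, i ∈ J ↔ inn lbar (alphaR n ct i) = 0) (horb : WOrb n ct lbar mu) :
    nsval n ct J (mval n J) = #{i | mu i = 0} := by
  obtain ⟨π, hπ⟩ := horb.exists_abs_eq hct
  simp only [JantzenBlocks.nsval_mval hct, ← h.apply_eq_zero_iff hct hJ]
  refine (card_equiv π fun i => ?_).symm
  simp only [mem_filter, mem_univ, true_and]
  rw [← abs_eq_zero, hπ, abs_eq_zero]

end Levels

/-! ### Saturation and separable pairs -/

section Saturation

open Finset Function

namespace Config

variable {R C : Type*} {T : Set (Vertex R C)} {x : Config R C}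

/-- The row of a cell, where the `last` cells form the row `origin`. -/
def rowVertex : Cell R C → Vertex R C
  | .entry r _ _ => .row r
  | .zero r => .row r
  | .last _ => .origin

/-- The column of a cell, where the `zero` cells form the column `origin`. -/
def colVertex : Cell R C → Vertex R C
  | .entry _ c _ => .col c
  | .zero _ => .origin
  | .last c => .col c

/-- The cells in rows outside `T` and columns in `T` are occupied in `x`, and those in rows in `T`
and columns outside `T` are empty. -/
structure Saturated (T : Set (Vertex R C)) (x : Config R C) : Prop where
  occupied : ∀ p, rowVertex p ∉ T → colVertex p ∈ T → x p = true
  empty : ∀ p, rowVertex p ∈ T → colVertex p ∉ T → x p = false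

theorem edge_of_eq_true {p : Cell R C} (h : x p = true) : Edge x (rowVertex p) (colVertex p) := by
  cases p with
  | entry r c e => exact ⟨e, h⟩
  | _ => exact h

theorem edge_of_eq_false {p : Cell R C} (h : x p = false) :
    Edge x (colVertex p) (rowVertex p) := by
  cases p with
  | entry r c e => exact ⟨e, h⟩
  | _ => exact h

theorem saturated_of_closed (hT : ∀ v w, v ∈ T → Edge x v w → w ∈ T) : Saturated T x where
  occupied p hrow hcol := by
    by_contra h
    exact hrow (hT _ _ hcol (edge_of_eq_false (by simpa using h)))
  empty p hrow hcol := by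
    by_contra h
    exact hcol (hT _ _ hrow (edge_of_eq_true (by simpa using h)))

end Config

open Config

/-- In a finite set `F`, the number of elements satisfying both `P` and `Q` is minimal if every
element satisfies `P` or `Q`, and maximal if `F` contains every such element. -/
theorem saturated_of_card_eq {α : Type*} {F G : Finset α} {P Q : α → Prop} [DecidablePred P]
    [DecidablePred Q] (hcard : #G = #F) (hP : #{p ∈ G | P p} = #{p ∈ F | P p})
    (hQ : #{p ∈ G | Q p} = #{p ∈ F | Q p}) (hand : ∀ p, P p → Q p → p ∈ F)
    (hor : ∀ p ∈ F, P p ∨ Q p) : (∀ p, P p → Q p → p ∈ G) ∧ ∀ p ∈ G, P p ∨ Q p := by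
  classical
  have hinex (H : Finset α) :
      #{p ∈ H | P p ∨ Q p} + #{p ∈ H | P p ∧ Q p} = #{p ∈ H | P p} + #{p ∈ H | Q p} := by
    rw [filter_or, filter_and, card_union_add_card_inter]
  have hsub : {p ∈ G | P p ∧ Q p} ⊆ {p ∈ F | P p ∧ Q p} := fun p hp => by
    simp only [mem_filter] at hp ⊢
    exact ⟨hand p hp.2.1 hp.2.2, hp.2⟩
  have hF := hinex F
  have hG := hinex G
  rw [filter_true_of_mem hor] at hF
  have hle := card_filter_le G fun p => P p ∨ Q p
  have hle' := card_le_card hsub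
  constructor
  · have heq := eq_of_subset_of_card_le hsub (by omega)
    intro p hp hq
    have hmem : p ∈ {p ∈ F | P p ∧ Q p} := mem_filter.mpr ⟨hand p hp hq, hp, hq⟩
    exact (mem_filter.mp (heq ▸ hmem)).1
  · exact filter_eq_self.mp (eq_of_subset_of_card_le (filter_subset _ _) (by omega))

theorem Config.Saturated.congr {R C ι : Type*} [Finite ι] {T : Set (Vertex R C)}
    {f g : ι → Cell R C} (h : Saturated T (ofCells f)) (hf : Injective f) (hg : Injective g)
    (hrow : ∀ i, rowVertex (g i) = rowVertex (f i)) (π : Equiv.Perm ι)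
    (hcol : ∀ i, colVertex (g i) = colVertex (f (π i))) : Saturated T (ofCells g) := by
  classical
  have := Fintype.ofFinite ι
  have hmem {f : ι → Cell R C} (hf : Injective f) (p : Cell R C) :
      p ∈ univ.map ⟨f, hf⟩ ↔ ofCells f p = true := by simp [ofCells_eq_true]
  obtain ⟨hand, hor⟩ := saturated_of_card_eq (F := univ.map ⟨f, hf⟩) (G := univ.map ⟨g, hg⟩)
    (P := fun p => rowVertex p ∉ T) (Q := fun p => colVertex p ∈ T) (by simp)
    (by simp [filter_map, hrow])
    (by
      simp only [filter_map, card_map, comp_def, Embedding.coeFn_mk, hcol]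
      exact card_equiv π (by simp))
    (fun p hp hq => (hmem hf p).mpr (h.occupied p hp hq))
    fun p hp => by
      by_contra! hpq
      simp [h.empty p hpq.1 hpq.2, hmem hf] at hp
  refine ⟨fun p hp hq => (hmem hg p).mp (hand p hp hq), fun p hp hq => ?_⟩
  by_contra hpg
  exact (hor p ((hmem hg p).mpr (by simpa using hpg))).elim (· hp) hq

theorem card_filter_le_of_forall_occupied {R C ι : Type*} [Fintype ι] {f g : ι → Cell R C}
    (hg : Injective g) {q : Cell R C → Prop} [DecidablePred q]
    (h : ∀ p, q p → ofCells f p = true) : #{i | q (g i)} ≤ #{i | q (f i)} := by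
  classical
  calc #{i | q (g i)} = #(image g {i | q (g i)}) := (card_image_of_injective _ hg).symm
    _ ≤ #(image f {i | q (f i)}) := card_le_card fun p hp => by
      obtain ⟨i, hi, rfl⟩ := mem_image.mp hp
      obtain ⟨j, hj⟩ := ofCells_eq_true.mp (h _ (mem_filter.mp hi).2)
      exact mem_image.mpr ⟨j, by simpa [hj] using hi, hj⟩
    _ ≤ #{i | q (f i)} := card_image_le

theorem card_filter_eq_card_filter_ofCells {R C ι β : Type*} [Fintype ι] [Fintype β]
    {f : ι → Cell R C} {e : β → Cell R C} (hf : Injective f) (he : Injective e) {q : ι → Prop}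
    [DecidablePred q] (hq : ∀ i, q i ↔ ∃ b, e b = f i) : #{i | q i} = #{b | ofCells f (e b)} := by
  classical
  rw [← card_image_of_injective _ hf, ← card_image_of_injective _ he]
  congr 1
  ext p
  simp only [mem_image, mem_filter, mem_univ, true_and, hq, ofCells_eq_true]
  constructor
  · rintro ⟨i, ⟨b, hb⟩, rfl⟩
    exact ⟨b, ⟨i, hb.symm⟩, hb⟩
  · rintro ⟨b, ⟨i, hi⟩, rfl⟩
    exact ⟨i, ⟨b, hi.symm⟩, hi⟩

end Saturation

section SeparablePairs

open Finset Function Config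

variable {n : ℕ} {ct : CType} {I J : Finset (Fin n)} {C : Type} {a : C → ℝ} {lam mu lbar : V n}
  {f g : Fin n → Cell (Fin (numCuts I)) C} {s t : ℕ} {v v' : ℝ}
  {p p' : Cell (Fin (numCuts I)) C}

/-- The row of the segment with `0`-based number `s`, where the last segment has row `origin`. -/
def segVertex (I : Finset (Fin n)) (C : Type) (s : ℕ) : Vertex (Fin (numCuts I)) C :=
  if h : s < numCuts I then .row ⟨s, h⟩ else .origin

/-- The column of the value `a_{t+1}`, where the last value `0` has column `origin`. -/
def levelVertex (R : Type) (J : Finset (Fin n)) (t : ℕ) : Vertex R (Fin (numCuts J)) :=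
  if h : t < numCuts J then .col ⟨t, h⟩ else .origin

theorem segVertex_val (C : Type) (s : Fin (numCuts I)) : segVertex I C s = .row s := by
  simp [segVertex]

theorem segVertex_numCuts (I : Finset (Fin n)) (C : Type) :
    segVertex I C (numCuts I) = .origin := by
  simp [segVertex]

theorem levelVertex_val (R : Type) (c : Fin (numCuts J)) : levelVertex R J c = .col c := by
  simp [levelVertex]

theorem levelVertex_numCuts (R : Type) (J : Finset (Fin n)) :
    levelVertex R J (numCuts J) = .origin := by
  simp [levelVertex]

theorem segVertex_injOn (I : Finset (Fin n)) (C : Type) :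
    Set.InjOn (segVertex I C) (Set.Iic (numCuts I)) := by
  intro s hs t ht hst
  simp only [Set.mem_Iic, segVertex] at hs ht hst
  split_ifs at hst with hs' ht' ht'
  · simpa using hst
  · omega

theorem Occupies.rowVertex_eq (h : Occupies I a s v p) : rowVertex p = segVertex I C s := by
  cases p <;> obtain ⟨rfl, -⟩ := h <;> simp [rowVertex, segVertex]

theorem Occupies.colVertex_eq_origin_iff (ha : IsLevels a) (h : Occupies I a s v p) :
    colVertex p = .origin ↔ v = 0 := by
  cases p <;> obtain ⟨-, hv⟩ := h
  case entry r c e => simp [colVertex, hv, ha.boolSign_mul_ne_zero]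
  case zero r => simp [colVertex, hv]
  case last c => simp [colVertex, ← abs_eq_zero (a := v), hv, (ha.pos c).ne']

theorem Occupies.colVertex_eq_col_iff (ha : IsLevels a) (h : Occupies I a s v p) {c : C} :
    colVertex p = .col c ↔ |v| = a c := by
  cases p <;> obtain ⟨-, hv⟩ := h
  case entry r d e => simp [colVertex, hv, ha.abs_boolSign_mul, ha.injective.eq_iff]
  case zero r => simp [colVertex, hv, (ha.pos c).ne]
  case last d => simp [colVertex, hv, ha.injective.eq_iff]

theorem Occupies.colVertex_eq (ha : IsLevels a) (h : Occupies I a s v p)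
    (h' : Occupies I a t v' p') (hv : |v| = |v'|) : colVertex p = colVertex p' := by
  cases hp : colVertex p' with
  | row r => cases p' <;> cases hp
  | col c => rw [h.colVertex_eq_col_iff ha, hv, ← h'.colVertex_eq_col_iff ha, hp]
  | origin =>
    rwa [h.colVertex_eq_origin_iff ha, ← abs_eq_zero, hv, abs_eq_zero,
      ← h'.colVertex_eq_origin_iff ha]

theorem IsPlacement.saturated_congr (hct : ct ≠ .D) (ha : IsLevels a) (hf : IsPlacement I a lam f)
    (hg : IsPlacement I a mu g) (horb : WOrb n ct lam mu) {T : Set (Vertex (Fin (numCuts I)) C)}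
    (h : Saturated T (ofCells f)) : Saturated T (ofCells g) := by
  obtain ⟨π, hπ⟩ := horb.exists_abs_eq hct
  exact h.congr hf.injective hg.injective
    (fun i => (hg.occupies i).rowVertex_eq.trans (hf.occupies i).rowVertex_eq.symm) π
    fun i => (hg.occupies i).colVertex_eq ha (hf.occupies _) (hπ i)

theorem IsPlacement.card_segIdx_eq_numCuts [Fintype C] (h : IsPlacement I a lam f) :
    #{i | segIdx I i = numCuts I} = #{c | ofCells f (.last c)} := by
  refine card_filter_eq_card_filter_ofCells h.injective
    (fun c d hcd => by injection hcd) fun i => ?_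
  have hocc := h.occupies i
  cases hfi : f i <;> rw [hfi] at hocc
  case last c => simp [hocc.1]
  all_goals simp [hocc.1, (Fin.is_lt _).ne]

theorem IsPlacement.card_apply_eq_zero (ha : IsLevels a) (h : IsPlacement I a lam f) :
    #{i | lam i = 0} = #{s | ofCells f (.zero s)} := by
  refine card_filter_eq_card_filter_ofCells h.injective
    (fun c d hcd => by injection hcd) fun i => ?_
  rw [← (h.occupies i).colVertex_eq_origin_iff ha]
  cases f i <;> simp [colVertex]

open Classical in
theorem IsPlacement.nsl_aval {f : Fin n → Cell (Fin (numCuts I)) (Fin (numCuts J))}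
    (hct : ct ≠ .D) (ha : IsLevels (levels n ct J lbar))
    (h : IsPlacement I (levels n ct J lbar) lam f) (hs : s ≤ numCuts I) (ht : t ≤ numCuts J) :
    nsl n ct I lam (s + 1) (aval n ct J lbar (t + 1)) =
      #{i | rowVertex (f i) = segVertex I _ s ∧ colVertex (f i) = levelVertex _ J t} := by
  rw [nsl_add_one hct hs]
  congr 1
  refine filter_congr fun i _ => and_congr ?_ ?_
  · rw [(h.occupies i).rowVertex_eq, (segVertex_injOn I _).eq_iff (segIdx_le_numCuts I i) hs]
  · obtain ht | rfl := ht.lt_or_eq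
    · exact ((levelVertex_val _ ⟨t, ht⟩).symm ▸ (h.occupies i).colVertex_eq_col_iff ha).symm
    · rw [aval_numCuts_add_one, levelVertex_numCuts, (h.occupies i).colVertex_eq_origin_iff ha,
        abs_eq_zero]

variable {T : Set (Vertex (Fin (numCuts I)) (Fin (numCuts J)))}
  {f : Fin n → Cell (Fin (numCuts I)) (Fin (numCuts J))}

theorem IsPlacement.isMaxN (hct : ct ≠ .D) (hdom : DominantW n ct lbar)
    (hJ : ∀ i, i ∈ J ↔ inn lbar (alphaR n ct i) = 0) (horb : WOrb n ct lbar lam)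
    (h : IsPlacement I (levels n ct J lbar) lam f) (hsat : Saturated T (ofCells f))
    (hs : s ≤ numCuts I) (ht : t ≤ numCuts J) (hsT : segVertex I _ s ∉ T)
    (htT : levelVertex _ J t ∈ T) : IsMaxN n ct I lam (s + 1) (aval n ct J lbar (t + 1)) := by
  intro mu hmu hreg
  have ha := hdom.isLevels hct hJ
  obtain ⟨g, hg⟩ := hdom.exists_isPlacement hct hJ (horb.trans hmu) hreg
  rw [hg.nsl_aval hct ha hs ht, h.nsl_aval hct ha hs ht]
  exact card_filter_le_of_forall_occupied hg.injective
    (q := fun p => rowVertex p = segVertex I _ s ∧ colVertex p = levelVertex _ J t)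
    fun p hp => hsat.occupied p (hp.1 ▸ hsT) (hp.2 ▸ htT)

theorem IsPlacement.nsl_eq_zero (hct : ct ≠ .D) (ha : IsLevels (levels n ct J lbar))
    (h : IsPlacement I (levels n ct J lbar) lam f) (hsat : Saturated T (ofCells f))
    (hs : s ≤ numCuts I) (ht : t ≤ numCuts J) (hsT : segVertex I _ s ∈ T)
    (htT : levelVertex _ J t ∉ T) : nsl n ct I lam (s + 1) (aval n ct J lbar (t + 1)) = 0 := by
  rw [h.nsl_aval hct ha hs ht, card_eq_zero, filter_eq_empty_iff]
  rintro i - ⟨hrow, hcol⟩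
  exact ofCells_eq_false.mp (hsat.empty (f i) (hrow ▸ hsT) (hcol ▸ htT)) i rfl

open Classical in
/-- The set `S` of the separable pair defined by a closed set `T` of vertices. -/
noncomputable def segSet (T : Set (Vertex (Fin (numCuts I)) C)) : Finset ℕ :=
  {s ∈ Icc 1 (mval n I) | segVertex I C (s - 1) ∉ T}

open Classical in
/-- The set `S̄` of the separable pair defined by a closed set `T` of vertices. -/
noncomputable def levelSet {R : Type} (T : Set (Vertex R (Fin (numCuts J)))) : Finset ℕ :=
  {t ∈ Icc 1 (mval n J) | levelVertex R J (t - 1) ∈ T}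

theorem add_one_mem_segSet {T : Set (Vertex (Fin (numCuts I)) C)} (hs : s ≤ numCuts I) :
    s + 1 ∈ segSet T ↔ segVertex I C s ∉ T := by
  simp [segSet, mval_eq_numCuts_add_one, hs]

theorem add_one_mem_levelSet {R : Type} {T : Set (Vertex R (Fin (numCuts J)))}
    (ht : t ≤ numCuts J) : t + 1 ∈ levelSet T ↔ levelVertex R J t ∈ T := by
  simp [levelSet, mval_eq_numCuts_add_one, ht]

theorem mval_mem_segSet {T : Set (Vertex (Fin (numCuts I)) C)} :
    mval n I ∈ segSet T ↔ .origin ∉ T := by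
  rw [mval_eq_numCuts_add_one, add_one_mem_segSet le_rfl, segVertex_numCuts]

theorem mval_mem_levelSet {R : Type} {T : Set (Vertex R (Fin (numCuts J)))} :
    mval n J ∈ levelSet T ↔ .origin ∈ T := by
  rw [mval_eq_numCuts_add_one, add_one_mem_levelSet le_rfl, levelVertex_numCuts]

theorem IsPlacement.isSepPair (hct : ct ≠ .D) (hdom : DominantW n ct lbar)
    (hJ : ∀ i, i ∈ J ↔ inn lbar (alphaR n ct i) = 0) (horb : WOrb n ct lbar lam)
    (h : IsPlacement I (levels n ct J lbar) lam f) (hsat : Saturated T (ofCells f))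
    {s : Fin (numCuts I)} {c : Fin (numCuts J)}
    (hT : .origin ∈ T ∧ .row s ∉ T ∨ .origin ∉ T ∧ .col c ∈ T) :
    IsSepPair n ct I J lbar lam (segSet T) (levelSet T) := by
  have hmem {K : Finset (Fin n)} {s : ℕ} (hs : s ∈ Icc 1 (mval n K)) :
      ∃ s' ≤ numCuts K, s = s' + 1 := by
    rw [mem_Icc, mval_eq_numCuts_add_one] at hs
    exact ⟨s - 1, by omega, by omega⟩
  refine ⟨?_, ?_, filter_subset _ _, filter_subset _ _, ?_, ?_, fun s hs t ht => ?_,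
    fun s hs hsS t ht htS => ?_, ?_⟩
  · obtain ⟨-, hs⟩ | ⟨ho, -⟩ := hT
    exacts [⟨s + 1, by rwa [add_one_mem_segSet s.2.le, segVertex_val]⟩, ⟨_, mval_mem_segSet.mpr ho⟩]
  · obtain ⟨ho, -⟩ | ⟨-, hc⟩ := hT
    exacts [⟨_, mval_mem_levelSet.mpr ho⟩,
      ⟨c + 1, by rwa [add_one_mem_levelSet c.2.le, levelVertex_val]⟩]
  · exact mval_eq_numCuts_add_one I ▸ Nat.succ_lt_succ s.pos
  · exact mval_eq_numCuts_add_one J ▸ Nat.succ_lt_succ c.pos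
  · obtain ⟨s, hs', rfl⟩ := hmem (filter_subset _ _ hs)
    obtain ⟨t, ht', rfl⟩ := hmem (filter_subset _ _ ht)
    rw [add_one_mem_segSet hs'] at hs
    rw [add_one_mem_levelSet ht'] at ht
    exact h.isMaxN hct hdom hJ horb hsat hs' ht' hs ht
  · obtain ⟨s, hs', rfl⟩ := hmem hs
    obtain ⟨t, ht', rfl⟩ := hmem ht
    rw [add_one_mem_segSet hs', not_not] at hsS
    rw [add_one_mem_levelSet ht'] at htS
    exact h.nsl_eq_zero hct (hdom.isLevels hct hJ) hsat hs' ht' hsS htS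
  · cases ct with
    | D => exact absurd rfl hct
    | _ => simp only [mval_mem_segSet, mval_mem_levelSet]

theorem IsPlacement.not_isWeakPair (hct : ct ≠ .D) (hdom : DominantW n ct lbar)
    (hJ : ∀ i, i ∈ J ↔ inn lbar (alphaR n ct i) = 0) (horb : WOrb n ct lbar lam)
    (h : IsPlacement I (levels n ct J lbar) lam f) (hsat : Saturated T (ofCells f))
    (h1 : ¬ (nsval n ct I (mval n I) = 0 ∧ nsval n ct J (mval n J) = mval n I - 1))
    (h2 : ¬ (nsval n ct I (mval n I) = mval n J - 1 ∧ nsval n ct J (mval n J) = 0)) :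
    ¬ IsWeakPair n I J (segSet T, levelSet T) := by
  rw [nsval_mval hct, hdom.nsval_mval hct hJ horb, h.card_segIdx_eq_numCuts,
    h.card_apply_eq_zero (hdom.isLevels hct hJ), mval_eq_numCuts_add_one,
    Nat.add_sub_cancel] at h1 h2
  have hsame (hS : mval n I ∈ segSet T) (hSb : mval n J ∈ levelSet T) : False :=
    mval_mem_segSet.mp hS (mval_mem_levelSet.mp hSb)
  have hrow (s : Fin (numCuts I)) : (s + 1 : ℕ) ∈ segSet T ↔ .row s ∉ T := by
    rw [add_one_mem_segSet s.2.le, segVertex_val]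
  have hcol (c : Fin (numCuts J)) : (c + 1 : ℕ) ∈ levelSet T ↔ .col c ∈ T := by
    rw [add_one_mem_levelSet c.2.le, levelVertex_val]
  rintro (hp | hp | hp | hp) <;> obtain ⟨hS, hSb⟩ := Prod.mk.inj hp
  · have ho : .origin ∈ T := mval_mem_levelSet.mp (by simp [hSb])
    have hrow (s) : .row s ∉ T := (hrow s).mp (by simp [hS, mval_eq_numCuts_add_one])
    have hcol (c) : .col c ∉ T := mt (hcol c).mpr (by simp [hSb, mval_eq_numCuts_add_one, c.2.ne])
    exact h1 ⟨by simp [hsat.empty (.last _) ho (hcol _)],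
      by simp [hsat.occupied (.zero _) (hrow _) ho]⟩
  · exact hsame (by simp [hS, mval_eq_numCuts_add_one]) (by simp [hSb])
  · have ho : .origin ∉ T := mval_mem_segSet.mp (by simp [hS])
    have hrow (s) : .row s ∈ T :=
      not_not.mp (mt (hrow s).mpr (by simp [hS, mval_eq_numCuts_add_one, s.2.ne]))
    have hcol (c) : .col c ∈ T := (hcol c).mp (by simp [hSb, mval_eq_numCuts_add_one])
    exact h2 ⟨by simp [hsat.occupied (.last _) ho (hcol _)],
      by simp [hsat.empty (.zero _) (hrow _) ho]⟩
  · exact hsame (by simp [hS]) (by simp [hSb, mval_eq_numCuts_add_one])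

end SeparablePairs

theorem statement4_general (n : ℕ) (ct : CType) (hct : ct ≠ CType.D)
    (I J : Finset (Fin n)) (lam lbar : V n) (hreg : RegI n ct I lam)
    (horb : WOrb n ct lam lbar) (hdom : DominantW n ct lbar)
    (hJ : ∀ i : Fin n, i ∈ J ↔ inn lbar (alphaR n ct i) = 0)
    (i : Fin n) (hregi : RegI n ct I (sRefl (ee i) lam))
    (hnc : ¬ Conn n ct I lam (sRefl (ee i) lam))
    (h1 : ¬ (nsval n ct I (mval n I) = 0 ∧ nsval n ct J (mval n J) = mval n I - 1))
    (h2 : ¬ (nsval n ct I (mval n I) = mval n J - 1 ∧ nsval n ct J (mval n J) = 0)) :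
    ∃ p : Finset ℕ × Finset ℕ, ¬ IsWeakPair n I J p ∧
      ∀ mu, WOrb n ct lbar mu → RegI n ct I mu → IsSepPair n ct I J lbar mu p.1 p.2 := by
  have ha := hdom.isLevels hct hJ
  obtain ⟨f, hf⟩ := hdom.exists_isPlacement hct hJ horb.symm hreg
  rw [sRefl_ee] at hregi hnc
  obtain ⟨s, c, T, hclosed, hT⟩ := hf.exists_closed_of_not_conn hct ha hregi hnc
  have hsat := Config.saturated_of_closed hclosed
  refine ⟨_, hf.not_isWeakPair hct hdom hJ horb.symm hsat h1 h2, fun mu hmu hreg' => ?_⟩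
  obtain ⟨g, hg⟩ := hdom.exists_isPlacement hct hJ hmu hreg'
  exact hg.isSepPair hct hdom hJ hmu (hf.saturated_congr hct ha hg (horb.trans hmu) hsat) hT

/-- Proposition 5.6 / `ssprop1`. -/
theorem statement4 (n : ℕ) (ct : CType) (hct : ct = CType.B ∨ ct = CType.C)
    (I J : Finset (Fin n)) (lam lbar : V n)
    (hint : IntegralW n ct lam) (hreg : RegI n ct I lam)
    (horb : WOrb n ct lam lbar) (hdom : DominantW n ct lbar)
    (hJ : ∀ i : Fin n, i ∈ J ↔ inn lbar (alphaR n ct i) = 0)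
    (hA : 0 < aval n ct J lbar (mval n J - 1))
    (i : Fin n) (hregi : RegI n ct I (sRefl (ee i) lam))
    (hnc : ¬ Conn n ct I lam (sRefl (ee i) lam))
    (h1 : ¬ (nsval n ct I (mval n I) = 0 ∧ nsval n ct J (mval n J) = mval n I - 1))
    (h2 : ¬ (nsval n ct I (mval n I) = mval n J - 1 ∧ nsval n ct J (mval n J) = 0)) :
    StronglySepSys n ct I J lbar := by
  have hct' : ct ≠ CType.D := by rintro rfl; simp at hct
  obtain ⟨p, hweak, hsep⟩ :=
    statement4_general n ct hct' I J lam lbar hreg horb hdom hJ i hregi hnc h1 h2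
  exact ⟨p, fun mu hmu => hsep mu hmu.1 (regI_of_lamIPlus hct' hmu.2), hweak⟩

end JantzenBlocks
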